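/- For every λ > 0 there exists a unique C³ function l : T → ℝ satisfying the kernel equation l_{xxx} + l_{yyy} + l_x + l_y = λl on T together with the boundary conditions l(x,1) = 0, l(x,x) = 0 and l_x(x,x) = (λ/3)(1−x) for all x ∈ [0,1]. -/

import Mathlib

open MeasureTheory

noncomputable section

/-- The closed triangle `T = {(x, y) : 0 ≤ x ≤ y ≤ 1}`. -/
def T : Set (ℝ × ℝ) := {q : ℝ × ℝ | 0 ≤ q.1 ∧ q.1 ≤ q.2 ∧ q.2 ≤ 1}

/-- Partial derivative in the first variable. -/
def pdx (f : ℝ → ℝ → ℝ) (x y : ℝ) : ℝ := deriv (fun x' => f x' y) x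

/-- Partial derivative in the second variable. -/
def pdy (f : ℝ → ℝ → ℝ) (x y : ℝ) : ℝ := deriv (fun y' => f x y') y

/-- The inverse controller kernel for `lam`: a C³ function with
`l_xxx + l_yyy + l_x + l_y = lam l` on `T`, `l(x,1)=0`, `l(x,x)=0`,
`l_x(x,x) = (lam/3)(1-x)`. -/
def IsInverseControllerKernel (lam : ℝ) (l : ℝ → ℝ → ℝ) : Prop :=
  ContDiff ℝ 3 (Function.uncurry l) ∧
  (∀ x y : ℝ, (x, y) ∈ T →
    pdx (pdx (pdx l)) x y + pdy (pdy (pdy l)) x y + pdx l x y + pdy l x y = lam * l x y) ∧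
  (∀ x ∈ Set.Icc (0:ℝ) 1, l x 1 = 0) ∧
  (∀ x ∈ Set.Icc (0:ℝ) 1, l x x = 0) ∧
  (∀ x ∈ Set.Icc (0:ℝ) 1, pdx l x x = lam / 3 * (1 - x))

section Kernel

open Complex Set Filter Topology

/-- Differentiation under the integral sign for two real parameters and a compact interval. -/
theorem hasFDerivAt_intervalIntegral_of_continuous {F F₁ F₂ : ℝ × ℝ → ℝ → ℂ} {a b : ℝ}
    (hF : Continuous (Function.uncurry F)) (hF₁ : Continuous (Function.uncurry F₁))
    (hF₂ : Continuous (Function.uncurry F₂))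
    (hd : ∀ p φ, HasFDerivAt (fun q => F q φ)
      ((ContinuousLinearMap.fst ℝ ℝ ℝ).smulRight (F₁ p φ) +
        (ContinuousLinearMap.snd ℝ ℝ ℝ).smulRight (F₂ p φ)) p) (p : ℝ × ℝ) :
    HasFDerivAt (fun q => ∫ φ in a..b, F q φ)
      ((ContinuousLinearMap.fst ℝ ℝ ℝ).smulRight (∫ φ in a..b, F₁ p φ) +
        (ContinuousLinearMap.snd ℝ ℝ ℝ).smulRight (∫ φ in a..b, F₂ p φ)) p := by
  set F' : ℝ × ℝ → ℝ → (ℝ × ℝ →L[ℝ] ℂ) := fun q φ =>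
    (ContinuousLinearMap.fst ℝ ℝ ℝ).smulRight (F₁ q φ) +
        (ContinuousLinearMap.snd ℝ ℝ ℝ).smulRight (F₂ q φ) with hF'
  have hcs : ∀ (L : ℝ × ℝ →L[ℝ] ℝ) {H : ℝ × ℝ → ℝ → ℂ}, Continuous (Function.uncurry H) →
      Continuous (Function.uncurry fun q φ => L.smulRight (H q φ)) := fun L H hH =>
    (ContinuousLinearMap.smulRightL ℝ (ℝ × ℝ) ℂ L).continuous.comp hH
  have hF'c : Continuous (Function.uncurry F') := (hcs _ hF₁).add (hcs _ hF₂)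
  have hsec : ∀ {E : Type} [NormedAddCommGroup E] [NormedSpace ℝ E] {H : ℝ × ℝ → ℝ → E}
      (q : ℝ × ℝ), Continuous (Function.uncurry H) → Continuous (H q) := fun q h =>
    h.comp (by fun_prop : Continuous fun φ : ℝ => (q, φ))
  obtain ⟨C, hC⟩ := ((isCompact_closedBall p 1).prod
      (isCompact_uIcc (a := a) (b := b))).exists_bound_of_continuousOn
    hF'c.continuousOn
  have key := (intervalIntegral.hasFDerivAt_integral_of_dominated_of_fderiv_le (𝕜 := ℝ)
    (μ := volume) (F := F) (F' := F') (x₀ := p) (a := a) (b := b) (bound := fun _ => C)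
    (Metric.ball_mem_nhds p one_pos)
    (Eventually.of_forall fun q => (hsec q hF).aestronglyMeasurable)
    ((hsec p hF).intervalIntegrable _ _)
    (hsec p hF'c).aestronglyMeasurable
    (Eventually.of_forall fun φ hφ q hq => hC (q, φ) ⟨Metric.ball_subset_closedBall hq,
      uIoc_subset_uIcc hφ⟩)
    intervalIntegrable_const
    (Eventually.of_forall fun φ _ q _ => hd q φ))
  refine key.congr_fderiv ?_
  symm
  have i1 := (hsec p (hcs (ContinuousLinearMap.fst ℝ ℝ ℝ) hF₁)).intervalIntegrable (μ := volume) a b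
  have i2 := (hsec p (hcs (ContinuousLinearMap.snd ℝ ℝ ℝ) hF₂)).intervalIntegrable (μ := volume) a b
  have j1 := (hsec p hF₁).intervalIntegrable (μ := volume) a b
  have j2 := (hsec p hF₂).intervalIntegrable (μ := volume) a b
  rw [hF']
  rw [intervalIntegral.integral_add i1 i2]
  congr 1
  · exact ((ContinuousLinearMap.smulRightL ℝ (ℝ × ℝ) ℂ
      (ContinuousLinearMap.fst ℝ ℝ ℝ)).intervalIntegral_comp_comm j1).symm
  · exact ((ContinuousLinearMap.smulRightL ℝ (ℝ × ℝ) ℂ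
      (ContinuousLinearMap.snd ℝ ℝ ℝ)).intervalIntegral_comp_comm j2).symm

/-- The solution of `Φ' = ϑ Φ + g`, `Φ(0) = c`, with the frequency `ϑ φ` depending on `φ`. -/
def duhamel (ϑ : ℝ → ℂ) (c : ℝ) (g : ℝ → ℝ) (φ t : ℝ) : ℂ :=
  exp (t * ϑ φ) * (c + ∫ τ in (0 : ℝ)..t, exp (-τ * ϑ φ) * g τ)

theorem continuous_duhamel {ϑ : ℝ → ℂ} (hϑ : Continuous ϑ) (c : ℝ) {g : ℝ → ℝ}
    (hg : Continuous g) : Continuous fun p : ℝ × ℝ => duhamel ϑ c g p.1 p.2 := by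
  unfold duhamel
  have : Continuous fun p : ℝ × ℝ => ∫ τ in (0 : ℝ)..p.2, exp (-τ * ϑ p.1) * g τ := by
    apply intervalIntegral.continuous_parametric_intervalIntegral_of_continuous
    · fun_prop
    · fun_prop
  fun_prop

theorem hasDerivAt_duhamel (ϑ : ℝ → ℂ) (c : ℝ) {g : ℝ → ℝ}
    (hg : Continuous g) (φ t : ℝ) :
    HasDerivAt (duhamel ϑ c g φ) (ϑ φ * duhamel ϑ c g φ t + g t) t := by
  have hc : Continuous fun τ : ℝ => exp (-τ * ϑ φ) * (g τ : ℂ) := by fun_prop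
  have h1 : HasDerivAt (fun t : ℝ => ∫ τ in (0 : ℝ)..t, exp (-τ * ϑ φ) * (g τ : ℂ))
      (exp (-t * ϑ φ) * (g t : ℂ)) t :=
    intervalIntegral.integral_hasDerivAt_right (hc.intervalIntegrable _ _)
      (hc.stronglyMeasurableAtFilter _ _) hc.continuousAt
  have h2 : HasDerivAt (fun t : ℝ => exp (t * ϑ φ)) (exp (t * ϑ φ) * (1 * ϑ φ)) t :=
    ((ofRealCLM.hasDerivAt (x := t)).mul_const (ϑ φ)).cexp
  refine (h2.mul (h1.const_add (c : ℂ))).congr_deriv ?_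
  have h3 : exp (t * ϑ φ) * (exp (-t * ϑ φ) * (g t : ℂ)) = g t := by
    rw [← mul_assoc, ← Complex.exp_add]; simp
  rw [h3, duhamel]; ring

/-- Superposition of the functions `exp (s μ) Φ(t)` with amplitude `α`. -/
def superpose (μ ϑ : ℝ → ℂ) (c : ℝ) (g : ℝ → ℝ) (α : ℝ → ℂ) (p : ℝ × ℝ) : ℂ :=
  ∫ φ in (0 : ℝ)..2 * Real.pi, α φ * exp (p.1 * μ φ) * duhamel ϑ c g φ p.2

section superpose

variable {μ ϑ : ℝ → ℂ} {g : ℝ → ℝ}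

theorem continuous_superpose_integrand (hμ : Continuous μ) (hϑ : Continuous ϑ) (c : ℝ)
    (hg : Continuous g) {α : ℝ → ℂ} (hα : Continuous α) :
    Continuous (Function.uncurry fun (p : ℝ × ℝ) φ =>
      α φ * exp (p.1 * μ φ) * duhamel ϑ c g φ p.2) := by
  have := (continuous_duhamel hϑ c hg).comp
    (by fun_prop : Continuous fun q : (ℝ × ℝ) × ℝ => (q.2, q.1.2))
  simp only [Function.comp_def] at this
  simp only [Function.uncurry_def]
  fun_prop

theorem continuous_superpose (hμ : Continuous μ) (hϑ : Continuous ϑ) (c : ℝ)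
    (hg : Continuous g) {α : ℝ → ℂ} (hα : Continuous α) :
    Continuous (superpose μ ϑ c g α) :=
  intervalIntegral.continuous_parametric_intervalIntegral_of_continuous'
    (continuous_superpose_integrand hμ hϑ c hg hα) _ _

theorem hasFDerivAt_superpose (hμ : Continuous μ) (hϑ : Continuous ϑ) (c : ℝ)
    (hg : Continuous g) {α : ℝ → ℂ} (hα : Continuous α) (p : ℝ × ℝ) :
    HasFDerivAt (superpose μ ϑ c g α)
      ((ContinuousLinearMap.fst ℝ ℝ ℝ).smulRight (superpose μ ϑ c g (α * μ) p) +
        (ContinuousLinearMap.snd ℝ ℝ ℝ).smulRight (superpose μ ϑ c g (α * ϑ) p +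
          superpose μ ϑ 1 0 α (p.1, 0) * g p.2)) p := by
  have i1 := continuous_superpose_integrand hμ hϑ c hg (hα.mul hϑ)
  have i0 : Continuous (Function.uncurry fun (p : ℝ × ℝ) φ =>
      α φ * exp (p.1 * μ φ) * g p.2) := by
    simp only [Function.uncurry_def]; fun_prop
  have key := hasFDerivAt_intervalIntegral_of_continuous (a := 0) (b := 2 * Real.pi)
    (continuous_superpose_integrand hμ hϑ c hg hα)
    (continuous_superpose_integrand hμ hϑ c hg (hα.mul hμ))
    (F₂ := fun p φ => (α * ϑ) φ * exp (p.1 * μ φ) * duhamel ϑ c g φ p.2 +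
      α φ * exp (p.1 * μ φ) * g p.2) (i1.add i0)
    (fun p φ => by
      have h1 : HasFDerivAt (fun q : ℝ × ℝ => exp (q.1 * μ φ))
          ((exp (p.1 * μ φ) * μ φ) • (ofRealCLM.comp (ContinuousLinearMap.fst ℝ ℝ ℝ))) p := by
        have := ((ofRealCLM.comp (ContinuousLinearMap.fst ℝ ℝ ℝ)).hasFDerivAt (x := p)).mul_const
          (μ φ)
        have := this.cexp
        refine this.congr_fderiv ?_
        ext <;> simp
      have h2 : HasFDerivAt (fun q : ℝ × ℝ => duhamel ϑ c g φ q.2)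
          ((ContinuousLinearMap.snd ℝ ℝ ℝ).smulRight (ϑ φ * duhamel ϑ c g φ p.2 + g p.2)) p :=
        (hasDerivAt_duhamel ϑ c hg φ p.2).hasFDerivAt.comp p hasFDerivAt_snd
      refine ((h1.const_mul (α φ)).mul h2).congr_fderiv ?_
      ext <;> simp <;> ring) p
  refine key.congr_fderiv ?_
  congr 3
  have hs : ∀ {H : ℝ × ℝ → ℝ → ℂ}, Continuous (Function.uncurry H) → Continuous (H p) := fun h =>
    h.comp (by fun_prop : Continuous fun φ : ℝ => (p, φ))
  have := intervalIntegral.integral_add ((hs i1).intervalIntegrable (μ := volume) 0 (2 * Real.pi))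
    ((hs i0).intervalIntegrable 0 (2 * Real.pi))
  refine this.trans ?_
  simp only [superpose, duhamel, Pi.mul_apply]
  simp

theorem contDiff_superpose (hμ : Continuous μ) (hϑ : Continuous ϑ) (c : ℝ) (k : ℕ)
    (hg : ContDiff ℝ k g) {α : ℝ → ℂ} (hα : Continuous α) :
    ContDiff ℝ (k + 1 : ℕ) (superpose μ ϑ c g α) := by
  induction k generalizing α c g with
  | zero =>
    have hgc := hg.continuous
    rw [Nat.cast_add, Nat.cast_one, contDiff_succ_iff_fderiv_apply]
    refine ⟨fun p => (hasFDerivAt_superpose hμ hϑ c hgc hα p).differentiableAt, by simp, ?_⟩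
    intro y
    simp only [fun p => (hasFDerivAt_superpose hμ hϑ c hgc hα p).fderiv]
    have h1 := continuous_superpose hμ hϑ c hgc (hα.mul hμ)
    have h2 := continuous_superpose hμ hϑ c hgc (hα.mul hϑ)
    have h3 := continuous_superpose hμ hϑ 1 (g := 0) continuous_const hα
    simp only [Nat.cast_zero, contDiff_zero]
    simp
    fun_prop
  | succ k ih =>
    have hgc := hg.continuous
    rw [Nat.cast_add (k + 1) 1, Nat.cast_one, contDiff_succ_iff_fderiv_apply]
    refine ⟨fun p => (hasFDerivAt_superpose hμ hϑ c hgc hα p).differentiableAt, by simp, ?_⟩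
    intro y
    simp only [fun p => (hasFDerivAt_superpose hμ hϑ c hgc hα p).fderiv]
    have hg' : ContDiff ℝ k g := hg.of_le (by exact_mod_cast Nat.le_succ k)
    have h1 := ih c hg' (hα.mul hμ)
    have h2 := ih c hg' (hα.mul hϑ)
    have h3 := ih 1 (g := 0) contDiff_const hα
    have h4 : ContDiff ℝ (k + 1 : ℕ) fun p : ℝ × ℝ => ((g p.2 : ℝ) : ℂ) :=
      ofRealCLM.contDiff.comp (hg.comp contDiff_snd)
    have h5 : ContDiff ℝ (k + 1 : ℕ) fun p : ℝ × ℝ => superpose μ ϑ 1 0 α (p.1, 0) :=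
      h3.comp (contDiff_fst.prodMk contDiff_const)
    simp only [add_apply, ContinuousLinearMap.smulRight_apply]
    exact (contDiff_const.smul h1).add (contDiff_const.smul (h2.add (h5.mul h4)))

theorem superpose_eq_add_integral (hμ : Continuous μ) (hϑ : Continuous ϑ) (c : ℝ)
    (hg : Continuous g) {α : ℝ → ℂ} (hα : Continuous α) (s t : ℝ) :
    superpose μ ϑ c g α (s, t) = c * superpose μ ϑ 1 0 α (s, t) +
      ∫ τ in (0 : ℝ)..t, superpose μ ϑ 1 0 α (s, t - τ) * g τ := by
  have hsw : ∫ τ in (0 : ℝ)..t, ∫ φ in (0 : ℝ)..2 * Real.pi,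
      α φ * exp (s * μ φ) * exp ((t - τ : ℝ) * ϑ φ) * g τ =
      ∫ φ in (0 : ℝ)..2 * Real.pi, ∫ τ in (0 : ℝ)..t,
      α φ * exp (s * μ φ) * exp ((t - τ : ℝ) * ϑ φ) * g τ := by
    apply intervalIntegral_intervalIntegral_swap
    have : Continuous (Function.uncurry fun τ φ : ℝ =>
        α φ * exp (s * μ φ) * exp ((t - τ : ℝ) * ϑ φ) * (g τ : ℂ)) := by
      simp only [Function.uncurry_def]; fun_prop
    exact (this.continuousOn.integrableOn_compact
      ((isCompact_uIcc (a := 0) (b := t)).prod (isCompact_uIcc (a := 0) (b := 2 * Real.pi)))).mono_set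
      (prod_mono uIoc_subset_uIcc uIoc_subset_uIcc)
  have e1 : ∀ τ : ℝ, superpose μ ϑ 1 0 α (s, t - τ) * g τ = ∫ φ in (0 : ℝ)..2 * Real.pi,
      α φ * exp (s * μ φ) * exp ((t - τ : ℝ) * ϑ φ) * g τ := by
    intro τ
    simp [superpose, duhamel]
  simp only [e1]
  rw [hsw]
  simp only [superpose]
  rw [← intervalIntegral.integral_const_mul, ← intervalIntegral.integral_add]
  · refine intervalIntegral.integral_congr fun φ _ => ?_
    simp only [duhamel]
    rw [mul_add, mul_add, ← intervalIntegral.integral_const_mul, ← intervalIntegral.integral_const_mul]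
    congr 1
    · simp; ring
    · refine intervalIntegral.integral_congr fun τ _ => ?_
      have : exp ((t - τ : ℝ) * ϑ φ) = exp (t * ϑ φ) * exp (-τ * ϑ φ) := by
        rw [← Complex.exp_add]; push_cast; ring_nf
      simp only [this]; ring
  · apply Continuous.intervalIntegrable
    simp only [duhamel, Pi.zero_apply, ofReal_zero, mul_zero, intervalIntegral.integral_zero]
    fun_prop
  · apply Continuous.intervalIntegrable
    apply intervalIntegral.continuous_parametric_intervalIntegral_of_continuous
    · simp only [Function.uncurry_def]; fun_prop
    · fun_prop

end superpose

theorem superpose_one_zero (μ ϑ α : ℝ → ℂ) (s t : ℝ) :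
    superpose μ ϑ 1 0 α (s, t) =
      ∫ φ in (0 : ℝ)..2 * Real.pi, α φ * exp (s * μ φ) * exp (t * ϑ φ) := by
  simp [superpose, duhamel]

/-- A family of exponential solutions `exp (s μ + t ϑ)` of `6 G_stt + 2 G_sss + 2 G_s = lam G`,
together with an amplitude whose superposition vanishes on both axes. The family is the circle
`μ = n²`, `|n| = r`, on the characteristic curve `6 μ ϑ² + 2 μ³ + 2 μ = lam`. -/
theorem exists_characteristic_family {lam : ℝ} (hlam : 0 < lam) :
    ∃ μ ϑ α : ℝ → ℂ, Continuous μ ∧ Continuous ϑ ∧ Continuous α ∧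
      (∀ φ, 6 * μ φ * ϑ φ ^ 2 + 2 * μ φ ^ 3 + 2 * μ φ = lam) ∧
      (∀ t, superpose μ ϑ 1 0 α (0, t) = 0) ∧
      (∀ s, superpose μ ϑ 1 0 α (s, 0) = 0) ∧
      (∀ s, superpose μ ϑ 1 0 (α * ϑ) (s, 0) = lam / 6 * s) := by
  set P : ℂ → ℂ := fun n => (lam - 2 * n ^ 2 - 2 * n ^ 6) / 6 with hP
  have hPd : Differentiable ℂ P := by intro n; simp only [hP]; fun_prop
  have hP0 : P 0 = lam / 6 := by simp [hP]
  have hev : ∀ᶠ n in 𝓝 (0 : ℂ), P n ∈ slitPlane := by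
    refine hPd.continuous.continuousAt (isOpen_slitPlane.mem_nhds ?_)
    rw [hP0]
    left
    have : ((lam : ℂ) / 6).re = lam / 6 := by
      rw [show (lam : ℂ) / 6 = ((lam / 6 : ℝ) : ℂ) by push_cast; ring, ofReal_re]
    rw [this]; positivity
  obtain ⟨δ, hδ, hball⟩ := Metric.eventually_nhds_iff_ball.1 hev
  set r := δ / 2 with hr
  have hr0 : 0 < r := by positivity
  have hcb : Metric.closedBall (0 : ℂ) r ⊆ Metric.ball 0 δ :=
    Metric.closedBall_subset_ball (by linarith)
  set q : ℂ → ℂ := fun n => P n ^ (1 / 2 : ℂ) with hq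
  have hqd : ∀ n ∈ Metric.ball (0 : ℂ) δ, DifferentiableAt ℂ q n := fun n hn =>
    (hPd n).cpow_const (hball n hn)
  have hq2 : ∀ n, q n ^ 2 = P n := fun n => by
    simp only [hq]; rw [← cpow_nat_mul]; norm_num
  set ϑ : ℂ → ℂ := fun n => q n / n with hϑ
  set U : Set ℂ := Metric.ball 0 δ \ {0} with hU
  have hUo : IsOpen U := Metric.isOpen_ball.sdiff isClosed_singleton
  have hϑd : DifferentiableOn ℂ ϑ U := fun n hn =>
    ((hqd n hn.1).div differentiableAt_id hn.2).differentiableWithinAt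
  have hϑ' : ∀ n ∈ U, HasDerivAt ϑ (deriv ϑ n) n := fun n hn =>
    (hϑd.differentiableAt (hUo.mem_nhds hn)).hasDerivAt
  have hdc : ContinuousOn (deriv ϑ) U := (hϑd.deriv hUo).continuousOn
  have hsph : Metric.sphere (0 : ℂ) r ⊆ U := fun n hn =>
    ⟨hcb (Metric.sphere_subset_closedBall hn), by
      rintro (rfl : n = 0); simp at hn; exact hr0.ne hn⟩
  have hcm : ∀ φ, circleMap 0 r φ ∈ U := fun φ => hsph (circleMap_mem_sphere 0 hr0.le φ)
  have hcont : ∀ {f : ℂ → ℂ}, ContinuousOn f U → Continuous fun φ => f (circleMap 0 r φ) :=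
    fun hf => hf.comp_continuous (continuous_circleMap 0 r) hcm
  have h2pi : (2 * Real.pi * I : ℂ) ≠ 0 := by simp [Real.pi_ne_zero]
  have hint : ∀ {f : ℂ → ℂ}, ContinuousOn f U → CircleIntegrable f 0 r := fun hf =>
    (hf.mono hsph).circleIntegrable hr0.le
  have hes : ∀ (s : ℝ) (n : ℂ), HasDerivAt (fun n : ℂ => exp (s * n ^ 2))
      (exp (s * n ^ 2) * (s * (2 * n))) n := by
    intro s n
    have := ((hasDerivAt_pow 2 n).const_mul (s : ℂ)).cexp
    simpa using this
  refine ⟨fun φ => circleMap 0 r φ ^ 2, fun φ => ϑ (circleMap 0 r φ),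
    fun φ => deriv (circleMap 0 r) φ * (-(2 * Real.pi * I)⁻¹ * deriv ϑ (circleMap 0 r φ)),
    by fun_prop, hcont hϑd.continuousOn, ?_, ?_, ?_, ?_, ?_⟩
  · simp only [deriv_circleMap]
    have := hcont hdc
    fun_prop
  · intro φ
    have h0 : circleMap 0 r φ ≠ 0 := (hcm φ).2
    simp only [hϑ, div_pow, hq2, hP]
    field_simp
    ring
  · intro t
    rw [superpose_one_zero]
    have key : ∮ n in C(0, r), deriv ϑ n * exp (t * ϑ n) = 0 := by
      by_cases ht : t = 0
      · refine circleIntegral.integral_eq_zero_of_hasDerivWithinAt (f := ϑ) hr0.le fun n hn => ?_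
        simpa [ht] using (hϑ' n (hsph hn)).hasDerivWithinAt
      · refine circleIntegral.integral_eq_zero_of_hasDerivWithinAt
          (f := fun n => (t : ℂ)⁻¹ * exp (t * ϑ n)) hr0.le fun n hn => ?_
        refine HasDerivAt.hasDerivWithinAt ?_
        refine ((((hϑ' n (hsph hn)).const_mul (t : ℂ)).cexp).const_mul (t : ℂ)⁻¹).congr_deriv ?_
        have : (t : ℂ) ≠ 0 := by exact_mod_cast ht
        field_simp
    rw [circleIntegral] at key
    have := congrArg (fun z => -(2 * Real.pi * I)⁻¹ * z) key
    simp only [mul_zero, smul_eq_mul] at this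
    rw [← intervalIntegral.integral_const_mul] at this
    refine Eq.trans ?_ this
    refine intervalIntegral.integral_congr fun φ _ => ?_
    simp
    ring
  · intro s
    rw [superpose_one_zero]
    have h1 : ∮ n in C(0, r), (deriv ϑ n * exp (s * n ^ 2) + 2 * s * (q n * exp (s * n ^ 2))) = 0 := by
      refine circleIntegral.integral_eq_zero_of_hasDerivWithinAt
        (f := fun n => ϑ n * exp (s * n ^ 2)) hr0.le fun n hn => ?_
      refine HasDerivAt.hasDerivWithinAt ?_
      refine ((hϑ' n (hsph hn)).mul (hes s n)).congr_deriv ?_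
      have : n ≠ 0 := (hsph hn).2
      simp only [hϑ]
      field_simp
    have h2 : ∮ n in C(0, r), 2 * s * (q n * exp (s * n ^ 2)) = 0 := by
      refine DiffContOnCl.circleIntegral_eq_zero hr0.le ?_
      refine DifferentiableOn.diffContOnCl ?_
      rw [closure_ball _ hr0.ne']
      intro n hn
      have := hqd n (hcb hn)
      exact (by fun_prop : DifferentiableAt ℂ (fun n => 2 * s * (q n * exp (s * n ^ 2))) n).differentiableWithinAt
    have key : ∮ n in C(0, r), deriv ϑ n * exp (s * n ^ 2) = 0 := by
      rw [circleIntegral.integral_add, h2, add_zero] at h1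
      · exact h1
      · refine hint ?_; fun_prop
      · refine hint ?_
        have : ContinuousOn q U := fun n hn => (hqd n hn.1).continuousAt.continuousWithinAt
        fun_prop
    rw [circleIntegral] at key
    have := congrArg (fun z => -(2 * Real.pi * I)⁻¹ * z) key
    simp only [mul_zero, smul_eq_mul] at this
    rw [← intervalIntegral.integral_const_mul] at this
    refine Eq.trans ?_ this
    refine intervalIntegral.integral_congr fun φ _ => ?_
    simp
    ring
  · intro s
    rw [superpose_one_zero]
    have h1 : ∮ n in C(0, r), (deriv ϑ n * ϑ n * exp (s * n ^ 2) +
        s * ((n - 0)⁻¹ • (P n * exp (s * n ^ 2)))) = 0 := by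
      refine circleIntegral.integral_eq_zero_of_hasDerivWithinAt
        (f := fun n => ϑ n ^ 2 / 2 * exp (s * n ^ 2)) hr0.le fun n hn => ?_
      refine HasDerivAt.hasDerivWithinAt ?_
      refine ((((hϑ' n (hsph hn)).pow 2).div_const 2).mul (hes s n)).congr_deriv ?_
      have : n ≠ 0 := (hsph hn).2
      simp only [← hq2, hϑ, smul_eq_mul]
      field_simp
      simp
      field_simp
    have h2 : ∮ n in C(0, r), s * ((n - 0)⁻¹ • (P n * exp (s * n ^ 2))) =
        s * (2 * Real.pi * I * (lam / 6)) := by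
      rw [circleIntegral.integral_const_mul]
      have := DiffContOnCl.circleIntegral_sub_inv_smul (c := 0) (R := r) (w := 0)
        (f := fun n => P n * exp (s * n ^ 2))
        (Differentiable.diffContOnCl (by fun_prop)) (Metric.mem_ball_self hr0)
      rw [this]
      simp [hP0]
    have key : ∮ n in C(0, r), deriv ϑ n * ϑ n * exp (s * n ^ 2) =
        -(s * (2 * Real.pi * I * (lam / 6))) := by
      rw [circleIntegral.integral_add, h2] at h1
      · exact eq_neg_of_add_eq_zero_left h1
      · refine hint ?_
        have := hϑd.continuousOn
        fun_prop
      · refine hint ?_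
        have h0 : ∀ n ∈ U, n - 0 ≠ 0 := fun n hn => by simpa using hn.2
        have := hPd.continuous
        fun_prop (disch := assumption)
    rw [circleIntegral] at key
    have := congrArg (fun z => -(2 * Real.pi * I)⁻¹ * z) key
    simp only [smul_eq_mul] at this
    rw [← intervalIntegral.integral_const_mul] at this
    have e : -(2 * Real.pi * I : ℂ)⁻¹ * -(s * (2 * Real.pi * I * (lam / 6))) = lam / 6 * s := by
      have := Real.pi_ne_zero
      field_simp
    rw [← e, ← this]
    refine intervalIntegral.integral_congr fun φ _ => ?_
    simp
    ring

theorem abs_integral_exp_mul_abs_le {L : ℝ} (hL : 0 < L) (t : ℝ) :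
    |∫ τ in (0 : ℝ)..t, Real.exp (L * |τ|)| ≤ Real.exp (L * |t|) / L := by
  have pos : ∀ t : ℝ, 0 ≤ t → |∫ τ in (0 : ℝ)..t, Real.exp (L * |τ|)| ≤ Real.exp (L * |t|) / L := by
    intro t ht
    have h1 : ∫ τ in (0 : ℝ)..t, Real.exp (L * |τ|) = ∫ τ in (0 : ℝ)..t, Real.exp (L * τ) :=
      intervalIntegral.integral_congr fun τ hτ => by
        rw [uIcc_of_le ht] at hτ
        simp only [abs_of_nonneg hτ.1]
    rw [h1, intervalIntegral.integral_comp_mul_left (fun x => Real.exp x) hL.ne', integral_exp,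
      abs_of_nonneg ht, smul_eq_mul, mul_zero, Real.exp_zero,
      abs_of_nonneg, ← div_eq_inv_mul]
    · gcongr; linarith
    · have : 1 ≤ Real.exp (L * t) := Real.one_le_exp (by positivity)
      have : 0 ≤ Real.exp (L * t) - 1 := by linarith
      positivity
  rcases le_total 0 t with ht | ht
  · exact pos t ht
  · have h := pos (-t) (by linarith)
    have h2 := intervalIntegral.integral_comp_neg (a := 0) (b := -t) (fun τ => Real.exp (L * |τ|))
    simp only [abs_neg, neg_zero, neg_neg] at h2
    rw [h2, intervalIntegral.integral_symm, abs_neg, abs_neg] at h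
    exact h

/-- Solvability of a linear Volterra equation of the second kind with bounded continuous data. -/
theorem exists_volterra_solution {f : ℝ → ℝ} {k : ℝ × ℝ → ℝ} (hf : Continuous f)
    (hk : Continuous k) {B C : ℝ} (hB : ∀ t, |f t| ≤ B) (hC : 0 ≤ C)
    (hkC : ∀ t, ∀ τ ∈ uIoc 0 t, |k (t, τ)| ≤ C) :
    ∃ h : ℝ → ℝ, Continuous h ∧ ∀ t, h t = f t + ∫ τ in (0 : ℝ)..t, k (t, τ) * h τ := by
  set L : ℝ := 2 * C + 1 with hLdef
  have hL : 0 < L := by positivity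
  have hB0 : 0 ≤ B := (abs_nonneg _).trans (hB 0)
  set V : (ℝ → ℝ) → ℝ → ℝ := fun H t =>
    Real.exp (-(L * |t|)) * (f t + ∫ τ in (0 : ℝ)..t, k (t, τ) * (Real.exp (L * |τ|) * H τ)) with hV
  have hVc : ∀ {H : ℝ → ℝ}, Continuous H → Continuous (V H) := by
    intro H hH
    have : Continuous fun t : ℝ => ∫ τ in (0 : ℝ)..t, k (t, τ) * (Real.exp (L * |τ|) * H τ) := by
      apply intervalIntegral.continuous_parametric_intervalIntegral_of_continuous
      · simp only [Function.uncurry_def]; fun_prop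
      · fun_prop
    simp only [hV]; fun_prop
  have hci : ∀ {H : ℝ → ℝ}, Continuous H → ∀ t a b, IntervalIntegrable
      (fun τ => k (t, τ) * (Real.exp (L * |τ|) * H τ)) volume a b := by
    intro H hH t a b
    apply Continuous.intervalIntegrable; fun_prop
  have hest : ∀ {H : ℝ → ℝ} {M : ℝ}, Continuous H → (∀ t, |H t| ≤ M) → ∀ t,
      Real.exp (-(L * |t|)) * |∫ τ in (0 : ℝ)..t, k (t, τ) * (Real.exp (L * |τ|) * H τ)| ≤
        C / L * M := by
    intro H M hH hM t
    have hM0 : 0 ≤ M := (abs_nonneg _).trans (hM 0)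
    have h1 : |∫ τ in (0 : ℝ)..t, k (t, τ) * (Real.exp (L * |τ|) * H τ)| ≤
        |∫ τ in (0 : ℝ)..t, C * M * Real.exp (L * |τ|)| := by
      refine intervalIntegral.norm_integral_le_abs_of_norm_le (E := ℝ) ?_ ?_
      · refine (ae_restrict_iff' measurableSet_uIoc).2 (Eventually.of_forall fun τ hτ => ?_)
        rw [Real.norm_eq_abs, abs_mul, abs_mul, Real.abs_exp]
        calc |k (t, τ)| * (Real.exp (L * |τ|) * |H τ|) ≤ C * (Real.exp (L * |τ|) * M) := by
              gcongr
              · exact hkC t τ hτ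
              · exact hM τ
          _ = _ := by ring
      · apply Continuous.intervalIntegrable; fun_prop
    rw [intervalIntegral.integral_const_mul, abs_mul, abs_of_nonneg (by positivity : 0 ≤ C * M)] at h1
    calc _ ≤ Real.exp (-(L * |t|)) * (C * M * (Real.exp (L * |t|) / L)) := by
          gcongr
          exact h1.trans (by gcongr; exact abs_integral_exp_mul_abs_le hL t)
      _ = (Real.exp (-(L * |t|)) * Real.exp (L * |t|)) * (C / L * M) := by ring
      _ = _ := by rw [← Real.exp_add]; simp
  have hexp1 : ∀ t : ℝ, Real.exp (-(L * |t|)) ≤ 1 := fun t => by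
    rw [Real.exp_le_one_iff]; have := abs_nonneg t; nlinarith
  have hVb : ∀ H : BoundedContinuousFunction ℝ ℝ, ∀ t, ‖V H t‖ ≤ B + C / L * ‖H‖ := by
    intro H t
    have h2 := hest H.continuous (fun t => H.norm_coe_le_norm t) t
    rw [Real.norm_eq_abs, abs_mul, Real.abs_exp]
    calc _ ≤ Real.exp (-(L * |t|)) *
          (|f t| + |∫ τ in (0 : ℝ)..t, k (t, τ) * (Real.exp (L * |τ|) * H τ)|) := by
          gcongr; exact abs_add_le _ _
      _ ≤ 1 * B + C / L * ‖H‖ := by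
          rw [mul_add]
          gcongr
          · exact hexp1 t
          · exact hB t
      _ = _ := by ring
  set S : BoundedContinuousFunction ℝ ℝ → BoundedContinuousFunction ℝ ℝ := fun H =>
    BoundedContinuousFunction.ofNormedAddCommGroup (V H) (hVc H.continuous) _ (hVb H) with hS
  have hlip : LipschitzWith (1 / 2) S := by
    refine LipschitzWith.of_dist_le_mul fun H₁ H₂ => ?_
    rw [BoundedContinuousFunction.dist_le (by positivity)]
    intro t
    have hd : Continuous fun τ => H₁ τ - H₂ τ := H₁.continuous.sub H₂.continuous
    have h2 := hest hd (fun τ => by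
      simpa [Real.dist_eq] using BoundedContinuousFunction.dist_coe_le_dist (f := H₁) (g := H₂) τ) t
    have e : S H₁ t - S H₂ t = Real.exp (-(L * |t|)) *
        ∫ τ in (0 : ℝ)..t, k (t, τ) * (Real.exp (L * |τ|) * (H₁ τ - H₂ τ)) := by
      simp only [hS, hV, BoundedContinuousFunction.coe_ofNormedAddCommGroup]
      rw [← mul_sub, add_sub_add_left_eq_sub, ← intervalIntegral.integral_sub
        (hci H₁.continuous _ _ _) (hci H₂.continuous _ _ _)]
      congr 2
      ext τ; ring
    rw [Real.dist_eq, e, abs_mul, Real.abs_exp]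
    refine h2.trans ?_
    have : C / L ≤ 1 / 2 := by rw [div_le_div_iff₀ hL two_pos]; linarith
    push_cast
    gcongr
  have hcw : ContractingWith (1 / 2) S := ⟨by
    rw [← NNReal.coe_lt_coe]; push_cast; norm_num, hlip⟩
  set H := hcw.fixedPoint S
  have hH : S H = H := hcw.fixedPoint_isFixedPt
  refine ⟨fun t => Real.exp (L * |t|) * H t, by fun_prop, fun t => ?_⟩
  have : H t = V H t := by conv_lhs => rw [← hH]
                           rfl
  simp only
  rw [this]
  simp only [hV]
  rw [← mul_assoc, ← Real.exp_add]
  simp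

/-- A homogeneous Volterra inequality on `[0, 1]` only has the trivial solution. -/
theorem eq_zero_of_abs_le_integral {g : ℝ → ℝ} (hg : Continuous g) {C : ℝ}
    (h : ∀ t ∈ Icc (0 : ℝ) 1, |g t| ≤ C * ∫ τ in (0 : ℝ)..t, |g τ|) :
    ∀ t ∈ Icc (0 : ℝ) 1, g t = 0 := by
  set F : ℝ → ℝ := fun t => ∫ τ in (0 : ℝ)..t, |g τ| with hF
  have hd : ∀ t, HasDerivAt F |g t| t := fun t =>
    intervalIntegral.integral_hasDerivAt_right (hg.abs.intervalIntegrable _ _)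
      (hg.abs.stronglyMeasurableAtFilter _ _) hg.abs.continuousAt
  have hF0 : ∀ t ∈ Icc (0 : ℝ) 1, 0 ≤ F t := fun t ht =>
    intervalIntegral.integral_nonneg ht.1 fun _ _ => abs_nonneg _
  have hz := eq_zero_of_abs_deriv_le_mul_abs_self_of_eq_zero_right (f := F) (f' := fun t => |g t|)
    (K := C) (a := 0) (b := 1)
    (fun t _ => (hd t).continuousAt.continuousWithinAt) (fun t _ => (hd t).hasDerivWithinAt)
    (by simp [hF]) (fun t ht => by
      have ht' : t ∈ Icc (0 : ℝ) 1 := ⟨ht.1, ht.2.le⟩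
      simpa [abs_of_nonneg (hF0 t ht')] using h t ht')
  intro t ht
  have := h t ht
  rw [show (∫ τ in (0 : ℝ)..t, |g τ|) = F t from rfl, hz t ht, mul_zero] at this
  exact abs_nonpos_iff.1 this

/-- The partial derivative in the first variable of a function on the plane. -/
def d1 (F : ℝ × ℝ → ℝ) (p : ℝ × ℝ) : ℝ := fderiv ℝ F p (1, 0)

/-- The partial derivative in the second variable of a function on the plane. -/
def d2 (F : ℝ × ℝ → ℝ) (p : ℝ × ℝ) : ℝ := fderiv ℝ F p (0, 1)

/-- The kernel equation in the characteristic variables `s = x + y`, `t = y - x`. -/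
def KernelEq (lam : ℝ) (G : ℝ × ℝ → ℝ) (p : ℝ × ℝ) : Prop :=
  6 * d2 (d2 (d1 G)) p + 2 * d1 (d1 (d1 G)) p + 2 * d1 G p = lam * G p

/-- The properties of the family provided by `exists_characteristic_family`. -/
structure CharacteristicFamily (lam : ℝ) (μ ϑ α : ℝ → ℂ) : Prop where
  continuous_mu : Continuous μ
  continuous_theta : Continuous ϑ
  continuous_alpha : Continuous α
  curve : ∀ φ, 6 * μ φ * ϑ φ ^ 2 + 2 * μ φ ^ 3 + 2 * μ φ = lam
  left : ∀ t, superpose μ ϑ 1 0 α (0, t) = 0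
  bottom : ∀ s, superpose μ ϑ 1 0 α (s, 0) = 0
  bottom_deriv : ∀ s, superpose μ ϑ 1 0 (α * ϑ) (s, 0) = lam / 6 * s

section

variable {lam : ℝ} {μ ϑ α β : ℝ → ℂ} {c : ℝ} {g : ℝ → ℝ}

theorem hasFDerivAt_re_superpose (hμ : Continuous μ) (hϑ : Continuous ϑ) (c : ℝ)
    (hg : Continuous g) (hβ : Continuous β) (p : ℝ × ℝ) :
    HasFDerivAt (fun p => (superpose μ ϑ c g β p).re)
      ((ContinuousLinearMap.fst ℝ ℝ ℝ).smulRight (superpose μ ϑ c g (β * μ) p).re +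
        (ContinuousLinearMap.snd ℝ ℝ ℝ).smulRight (superpose μ ϑ c g (β * ϑ) p +
          superpose μ ϑ 1 0 β (p.1, 0) * g p.2).re) p := by
  refine (reCLM.hasFDerivAt.comp p (hasFDerivAt_superpose hμ hϑ c hg hβ p)).congr_fderiv ?_
  ext <;> simp

theorem d1_re_superpose (hμ : Continuous μ) (hϑ : Continuous ϑ) (c : ℝ)
    (hg : Continuous g) (hβ : Continuous β) :
    d1 (fun p => (superpose μ ϑ c g β p).re) = fun p => (superpose μ ϑ c g (β * μ) p).re := by
  ext p
  simp [d1, (hasFDerivAt_re_superpose hμ hϑ c hg hβ p).fderiv]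

theorem d2_re_superpose (hμ : Continuous μ) (hϑ : Continuous ϑ) (c : ℝ)
    (hg : Continuous g) (hβ : Continuous β) :
    d2 (fun p => (superpose μ ϑ c g β p).re) = fun p => (superpose μ ϑ c g (β * ϑ) p +
          superpose μ ϑ 1 0 β (p.1, 0) * g p.2).re := by
  ext p
  simp [d2, (hasFDerivAt_re_superpose hμ hϑ c hg hβ p).fderiv]

theorem hasDerivAt_superpose_bottom (hμ : Continuous μ) (hϑ : Continuous ϑ)
    (hβ : Continuous β) (s : ℝ) :
    HasDerivAt (fun s : ℝ => superpose μ ϑ 1 0 β (s, 0)) (superpose μ ϑ 1 0 (β * μ) (s, 0)) s := by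
  have h := hasFDerivAt_superpose hμ hϑ 1 (g := 0) continuous_const hβ (s, 0)
  have h2 : HasDerivAt (fun s : ℝ => (s, (0 : ℝ))) (1, 0) s :=
    (hasDerivAt_id s).prodMk (hasDerivAt_const s 0)
  refine (h.comp_hasDerivAt s h2).congr_deriv ?_
  simp

namespace CharacteristicFamily

theorem bottom_mul_mu (hF : CharacteristicFamily lam μ ϑ α) (s : ℝ) :
    superpose μ ϑ 1 0 (α * μ) (s, 0) = 0 := by
  refine (hasDerivAt_superpose_bottom hF.continuous_mu hF.continuous_theta
    hF.continuous_alpha s).unique ?_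
  simp only [hF.bottom]
  exact hasDerivAt_const s 0

theorem bottom_mul_mu_mul_theta (hF : CharacteristicFamily lam μ ϑ α) (s : ℝ) :
    superpose μ ϑ 1 0 (α * μ * ϑ) (s, 0) = lam / 6 := by
  rw [mul_right_comm]
  refine (hasDerivAt_superpose_bottom hF.continuous_mu hF.continuous_theta
    (hF.continuous_alpha.mul hF.continuous_theta) s).unique ?_
  simp only [hF.bottom_deriv]
  simpa using (ofRealCLM.hasDerivAt (x := s)).const_mul (lam / 6 : ℂ)

end CharacteristicFamily

/-- The solution of the kernel equation with value `g` on the line `s = 0`. -/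
def transport (μ ϑ α : ℝ → ℂ) (c : ℝ) (g : ℝ → ℝ) (p : ℝ × ℝ) : ℝ :=
  g p.2 + (superpose μ ϑ c g α p).re

namespace CharacteristicFamily

theorem contDiff_transport (hF : CharacteristicFamily lam μ ϑ α) (c : ℝ) (k : ℕ)
    (hg : ContDiff ℝ k g) : ContDiff ℝ k (transport μ ϑ α c g) :=
  (hg.comp contDiff_snd).add (reCLM.contDiff.comp ((contDiff_superpose hF.continuous_mu
    hF.continuous_theta c k hg hF.continuous_alpha).of_le (by exact_mod_cast Nat.le_succ k)))

theorem superpose_left (hF : CharacteristicFamily lam μ ϑ α) (c : ℝ) (hg : Continuous g) (t : ℝ) :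
    superpose μ ϑ c g α (0, t) = 0 := by
  rw [superpose_eq_add_integral hF.continuous_mu hF.continuous_theta c hg hF.continuous_alpha]
  simp [hF.left]

theorem transport_left (hF : CharacteristicFamily lam μ ϑ α) (c : ℝ) (hg : Continuous g) (t : ℝ) :
    transport μ ϑ α c g (0, t) = g t := by
  simp [transport, hF.superpose_left c hg]

theorem transport_bottom (hF : CharacteristicFamily lam μ ϑ α) (c : ℝ) (hg : Continuous g) (s : ℝ) :
    transport μ ϑ α c g (s, 0) = g 0 := by
  rw [transport, superpose_eq_add_integral hF.continuous_mu hF.continuous_theta c hg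
    hF.continuous_alpha]
  simp [hF.bottom]

theorem hasFDerivAt_transport (hF : CharacteristicFamily lam μ ϑ α) (c : ℝ)
    (hg : ContDiff ℝ 1 g) (p : ℝ × ℝ) :
    HasFDerivAt (transport μ ϑ α c g)
      ((ContinuousLinearMap.fst ℝ ℝ ℝ).smulRight (superpose μ ϑ c g (α * μ) p).re +
        (ContinuousLinearMap.snd ℝ ℝ ℝ).smulRight (deriv g p.2 +
          (superpose μ ϑ c g (α * ϑ) p).re)) p := by
  have h1 : HasFDerivAt (fun p : ℝ × ℝ => g p.2)
      ((ContinuousLinearMap.snd ℝ ℝ ℝ).smulRight (deriv g p.2)) p :=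
    ((hg.differentiable one_ne_zero p.2).hasDerivAt.hasFDerivAt).comp p hasFDerivAt_snd
  refine (h1.add (hasFDerivAt_re_superpose hF.continuous_mu hF.continuous_theta c hg.continuous
    hF.continuous_alpha p)).congr_fderiv ?_
  ext <;> simp [hF.bottom]

theorem d2_transport_bottom (hF : CharacteristicFamily lam μ ϑ α) (c : ℝ)
    (hg : ContDiff ℝ 1 g) (s : ℝ) :
    d2 (transport μ ϑ α c g) (s, 0) = deriv g 0 + c * (lam / 6 * s) := by
  rw [d2, (hF.hasFDerivAt_transport c hg (s, 0)).fderiv,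
    superpose_eq_add_integral hF.continuous_mu hF.continuous_theta c hg.continuous
    (hF.continuous_alpha.mul hF.continuous_theta)]
  simp [hF.bottom_deriv, ← ofReal_ofNat, ← ofReal_div]

theorem d1_transport (hF : CharacteristicFamily lam μ ϑ α) (c : ℝ) (hg : ContDiff ℝ 1 g) :
    d1 (transport μ ϑ α c g) = fun p => (superpose μ ϑ c g (α * μ) p).re := by
  ext p
  simp [d1, (hF.hasFDerivAt_transport c hg p).fderiv]

theorem d1_transport_bottom (hF : CharacteristicFamily lam μ ϑ α) (c : ℝ)
    (hg : ContDiff ℝ 1 g) (s : ℝ) : d1 (transport μ ϑ α c g) (s, 0) = 0 := by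
  rw [hF.d1_transport c hg]
  beta_reduce
  rw [superpose_eq_add_integral hF.continuous_mu hF.continuous_theta c hg.continuous
    (hF.continuous_alpha.mul hF.continuous_mu)]
  simp [hF.bottom_mul_mu]

theorem kernelEq_transport (hF : CharacteristicFamily lam μ ϑ α) (c : ℝ) (hg : ContDiff ℝ 1 g)
    (p : ℝ × ℝ) : KernelEq lam (transport μ ϑ α c g) p := by
  have hμ := hF.continuous_mu
  have hϑ := hF.continuous_theta
  have hα := hF.continuous_alpha
  have hgc := hg.continuous
  have e1 := hF.d1_transport c hg
  have e2 : d2 (d1 (transport μ ϑ α c g)) = fun p => (superpose μ ϑ c g (α * μ * ϑ) p).re := by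
    rw [e1, d2_re_superpose hμ hϑ c hgc (hα.mul hμ)]
    simp [hF.bottom_mul_mu]
  have e3 : d2 (d2 (d1 (transport μ ϑ α c g))) = fun p =>
      (superpose μ ϑ c g (α * μ * ϑ * ϑ) p).re + lam / 6 * g p.2 := by
    rw [e2, d2_re_superpose hμ hϑ c hgc ((hα.mul hμ).mul hϑ)]
    simp [hF.bottom_mul_mu_mul_theta, ← ofReal_ofNat, ← ofReal_div]
  have e4 : d1 (d1 (d1 (transport μ ϑ α c g))) = fun p =>
      (superpose μ ϑ c g (α * μ * μ * μ) p).re := by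
    rw [e1, d1_re_superpose hμ hϑ c hgc (hα.mul hμ),
      d1_re_superpose hμ hϑ c hgc ((hα.mul hμ).mul hμ)]
  have hs : ∀ {β : ℝ → ℂ}, Continuous β → IntervalIntegrable
      (fun φ => β φ * exp (p.1 * μ φ) * duhamel ϑ c g φ p.2) volume 0 (2 * Real.pi) := fun hβ =>
    ((continuous_superpose_integrand hμ hϑ c hgc hβ).comp
      (by fun_prop : Continuous fun φ : ℝ => (p, φ))).intervalIntegrable _ _
  have key : 6 * superpose μ ϑ c g (α * μ * ϑ * ϑ) p + 2 * superpose μ ϑ c g (α * μ * μ * μ) p +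
      2 * superpose μ ϑ c g (α * μ) p = lam * superpose μ ϑ c g α p := by
    simp only [superpose]
    rw [← intervalIntegral.integral_const_mul, ← intervalIntegral.integral_const_mul,
      ← intervalIntegral.integral_const_mul, ← intervalIntegral.integral_const_mul,
      ← intervalIntegral.integral_add, ← intervalIntegral.integral_add]
    · refine intervalIntegral.integral_congr fun φ _ => ?_
      simp only [Pi.mul_apply]
      rw [← hF.curve φ]; ring
    · exact ((hs (((hα.mul hμ).mul hϑ).mul hϑ)).const_mul 6).add
        ((hs (((hα.mul hμ).mul hμ).mul hμ)).const_mul 2)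
    · exact (hs (hα.mul hμ)).const_mul 2
    · exact (hs (((hα.mul hμ).mul hϑ).mul hϑ)).const_mul 6
    · exact (hs (((hα.mul hμ).mul hμ).mul hμ)).const_mul 2
  have key' := congrArg re key
  simp only [add_re, mul_re, re_ofNat, im_ofNat, ofReal_re, ofReal_im, zero_mul, sub_zero] at key'
  rw [KernelEq, e3, e4, e1, transport]
  linarith

/-- The real kernel of the Volterra operator in `transport`. -/
theorem transport_eq_add_integral (hF : CharacteristicFamily lam μ ϑ α) (c : ℝ)
    (hg : Continuous g) (s t : ℝ) :
    transport μ ϑ α c g (s, t) = g t + (c * (superpose μ ϑ 1 0 α (s, t)).re +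
      ∫ τ in (0 : ℝ)..t, (superpose μ ϑ 1 0 α (s, t - τ)).re * g τ) := by
  have hK := continuous_superpose hF.continuous_mu hF.continuous_theta 1 (g := 0) continuous_const
    hF.continuous_alpha
  rw [transport, superpose_eq_add_integral hF.continuous_mu hF.continuous_theta c hg
    hF.continuous_alpha]
  have := reCLM.intervalIntegral_comp_comm (μ := volume) (a := 0) (b := t)
    (f := fun τ => superpose μ ϑ 1 0 α (s, t - τ) * g τ)
    (by apply Continuous.intervalIntegrable; fun_prop)
  simp only [reCLM_apply] at this
  rw [add_re, ← this]
  simp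

end CharacteristicFamily

end

section

variable {F G : ℝ × ℝ → ℝ} {n : ℕ}

theorem contDiff_d1 (hF : ContDiff ℝ (n + 1 : ℕ) F) : ContDiff ℝ n (d1 F) :=
  (hF.fderiv_right (m := n) (by exact_mod_cast le_rfl)).clm_apply contDiff_const

theorem contDiff_d2 (hF : ContDiff ℝ (n + 1 : ℕ) F) : ContDiff ℝ n (d2 F) :=
  (hF.fderiv_right (m := n) (by exact_mod_cast le_rfl)).clm_apply contDiff_const

theorem d1_add (hF : Differentiable ℝ F) (hG : Differentiable ℝ G) :
    d1 (F + G) = d1 F + d1 G := by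
  ext p
  simp [d1, fderiv_add (hF p) (hG p)]

theorem d2_add (hF : Differentiable ℝ F) (hG : Differentiable ℝ G) :
    d2 (F + G) = d2 F + d2 G := by
  ext p
  simp [d2, fderiv_add (hF p) (hG p)]

theorem d1_sub (hF : Differentiable ℝ F) (hG : Differentiable ℝ G) :
    d1 (F - G) = d1 F - d1 G := by
  ext p
  simp [d1, fderiv_sub (hF p) (hG p)]

theorem d2_sub (hF : Differentiable ℝ F) (hG : Differentiable ℝ G) :
    d2 (F - G) = d2 F - d2 G := by
  ext p
  simp [d2, fderiv_sub (hF p) (hG p)]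

theorem d1_d2_comm (hF : ContDiff ℝ 2 F) : d1 (d2 F) = d2 (d1 F) := by
  ext p
  have hd : DifferentiableAt ℝ (fderiv ℝ F) p :=
    ((hF.fderiv_right (m := 1) (by norm_num)).differentiable one_ne_zero) p
  have h1 : d1 (d2 F) p = fderiv ℝ (fderiv ℝ F) p (1, 0) (0, 1) := by
    have := (hd.hasFDerivAt.clm_apply (hasFDerivAt_const ((0, 1) : ℝ × ℝ) p)).fderiv
    rw [d1, show d2 F = fun y => fderiv ℝ F y (0, 1) from rfl, this]
    simp
  have h2 : d2 (d1 F) p = fderiv ℝ (fderiv ℝ F) p (0, 1) (1, 0) := by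
    have := (hd.hasFDerivAt.clm_apply (hasFDerivAt_const ((1, 0) : ℝ × ℝ) p)).fderiv
    rw [d2, show d1 F = fun y => fderiv ℝ F y (1, 0) from rfl, this]
    simp
  rw [h1, h2]
  exact (hF.contDiffAt.isSymmSndFDerivAt (by simp)).eq _ _

/-- The linear change of variables `(x, y) ↦ (x + y, y - x)`. -/
def charCoord : ℝ × ℝ →L[ℝ] ℝ × ℝ :=
  (ContinuousLinearMap.fst ℝ ℝ ℝ + ContinuousLinearMap.snd ℝ ℝ ℝ).prod
    (ContinuousLinearMap.snd ℝ ℝ ℝ - ContinuousLinearMap.fst ℝ ℝ ℝ)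

@[simp]
theorem charCoord_apply (p : ℝ × ℝ) : charCoord p = (p.1 + p.2, p.2 - p.1) := rfl

theorem d1_comp_charCoord (hG : Differentiable ℝ G) :
    d1 (G ∘ charCoord) = (d1 G - d2 G) ∘ charCoord := by
  ext p
  rw [d1, fderiv_comp p (hG _) charCoord.differentiableAt, charCoord.fderiv]
  simp only [d1, d2, ContinuousLinearMap.comp_apply, Function.comp_apply, Pi.sub_apply, ← map_sub]
  simp

theorem d2_comp_charCoord (hG : Differentiable ℝ G) :
    d2 (G ∘ charCoord) = (d1 G + d2 G) ∘ charCoord := by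
  ext p
  rw [d2, fderiv_comp p (hG _) charCoord.differentiableAt, charCoord.fderiv]
  simp only [d1, d2, ContinuousLinearMap.comp_apply, Function.comp_apply, Pi.add_apply, ← map_add]
  simp

/-- The kernel operator in the original variables. -/
def kernelOp (F : ℝ × ℝ → ℝ) : ℝ × ℝ → ℝ := d1 (d1 (d1 F)) + d2 (d2 (d2 F)) + d1 F + d2 F

theorem kernelOp_comp_charCoord (hG : ContDiff ℝ 3 G) (p : ℝ × ℝ) :
    kernelOp (G ∘ charCoord) p = 6 * d2 (d2 (d1 G)) (charCoord p) +
      2 * d1 (d1 (d1 G)) (charCoord p) + 2 * d1 G (charCoord p) := by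
  have hd : ∀ {F : ℝ × ℝ → ℝ} {n : ℕ}, ContDiff ℝ (n + 1 : ℕ) F → Differentiable ℝ F :=
    fun h => h.differentiable (by simp)
  have a1 : ContDiff ℝ (1 + 1 : ℕ) (d1 G) := contDiff_d1 (n := 2) hG
  have a2 : ContDiff ℝ (1 + 1 : ℕ) (d2 G) := contDiff_d2 (n := 2) hG
  have a11 : ContDiff ℝ (0 + 1 : ℕ) (d1 (d1 G)) := contDiff_d1 a1
  have a12 : ContDiff ℝ (0 + 1 : ℕ) (d1 (d2 G)) := contDiff_d1 a2
  have a21 : ContDiff ℝ (0 + 1 : ℕ) (d2 (d1 G)) := contDiff_d2 a1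
  have a22 : ContDiff ℝ (0 + 1 : ℕ) (d2 (d2 G)) := contDiff_d2 a2
  have hG0 : Differentiable ℝ G := hd (n := 2) hG
  have c1 : d1 (d2 G) = d2 (d1 G) := d1_d2_comm (hG.of_le (by norm_num))
  have c2 : d1 (d2 (d2 G)) = d2 (d1 (d2 G)) := d1_d2_comm a2
  have e1 : d1 (d1 (d1 (G ∘ charCoord))) =
      (d1 (d1 (d1 G)) - d1 (d1 (d2 G)) - (d1 (d2 (d1 G)) - d1 (d2 (d2 G))) -
       (d2 (d1 (d1 G)) - d2 (d1 (d2 G)) - (d2 (d2 (d1 G)) - d2 (d2 (d2 G))))) ∘ charCoord := by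
    rw [d1_comp_charCoord hG0, d1_comp_charCoord ((hd a1).sub (hd a2)),
      d1_sub (hd a1) (hd a2), d2_sub (hd a1) (hd a2),
      d1_comp_charCoord (((hd a11).sub (hd a12)).sub ((hd a21).sub (hd a22))),
      d1_sub ((hd a11).sub (hd a12)) ((hd a21).sub (hd a22)), d1_sub (hd a11) (hd a12),
      d1_sub (hd a21) (hd a22),
      d2_sub ((hd a11).sub (hd a12)) ((hd a21).sub (hd a22)), d2_sub (hd a11) (hd a12),
      d2_sub (hd a21) (hd a22)]
  have e2 : d2 (d2 (d2 (G ∘ charCoord))) =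
      (d1 (d1 (d1 G)) + d1 (d1 (d2 G)) + (d1 (d2 (d1 G)) + d1 (d2 (d2 G))) +
       (d2 (d1 (d1 G)) + d2 (d1 (d2 G)) + (d2 (d2 (d1 G)) + d2 (d2 (d2 G))))) ∘ charCoord := by
    rw [d2_comp_charCoord hG0, d2_comp_charCoord ((hd a1).add (hd a2)),
      d1_add (hd a1) (hd a2), d2_add (hd a1) (hd a2),
      d2_comp_charCoord (((hd a11).add (hd a12)).add ((hd a21).add (hd a22))),
      d1_add ((hd a11).add (hd a12)) ((hd a21).add (hd a22)), d1_add (hd a11) (hd a12),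
      d1_add (hd a21) (hd a22),
      d2_add ((hd a11).add (hd a12)) ((hd a21).add (hd a22)), d2_add (hd a11) (hd a12),
      d2_add (hd a21) (hd a22)]
  rw [kernelOp, e1, e2, d1_comp_charCoord hG0, d2_comp_charCoord hG0, c2, c1]
  simp only [Pi.add_apply, Pi.sub_apply, Function.comp_apply]
  ring

theorem kernelOp_sub (hF : ContDiff ℝ 3 F) (hG : ContDiff ℝ 3 G) :
    kernelOp (F - G) = kernelOp F - kernelOp G := by
  have hd : ∀ {F : ℝ × ℝ → ℝ} {n : ℕ}, ContDiff ℝ (n + 1 : ℕ) F → Differentiable ℝ F :=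
    fun h => h.differentiable (by simp)
  have d1C : ∀ {F : ℝ × ℝ → ℝ}, ContDiff ℝ 3 F → ContDiff ℝ (1 + 1 : ℕ) (d1 F) :=
    fun h => contDiff_d1 (n := 2) h
  have d2C : ∀ {F : ℝ × ℝ → ℝ}, ContDiff ℝ 3 F → ContDiff ℝ (1 + 1 : ℕ) (d2 F) :=
    fun h => contDiff_d2 (n := 2) h
  have hF0 : Differentiable ℝ F := hd (n := 2) hF
  have hG0 : Differentiable ℝ G := hd (n := 2) hG
  rw [kernelOp, d1_sub hF0 hG0, d2_sub hF0 hG0, d1_sub (hd (d1C hF)) (hd (d1C hG)),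
    d2_sub (hd (d2C hF)) (hd (d2C hG)),
    d1_sub (hd (contDiff_d1 (d1C hF))) (hd (contDiff_d1 (d1C hG))),
    d2_sub (hd (contDiff_d2 (d2C hF))) (hd (contDiff_d2 (d2C hG))), kernelOp, kernelOp]
  abel

theorem pdx_eq_d1 {l : ℝ → ℝ → ℝ} (hl : Differentiable ℝ (Function.uncurry l)) :
    pdx l = fun x y => d1 (Function.uncurry l) (x, y) := by
  ext x y
  have h : HasDerivAt (fun x' : ℝ => (x', y)) (1, 0) x :=
    (hasDerivAt_id x).prodMk (hasDerivAt_const x y)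
  exact ((hl (x, y)).hasFDerivAt.comp_hasDerivAt x h).deriv

theorem pdy_eq_d2 {l : ℝ → ℝ → ℝ} (hl : Differentiable ℝ (Function.uncurry l)) :
    pdy l = fun x y => d2 (Function.uncurry l) (x, y) := by
  ext x y
  have h : HasDerivAt (fun y' : ℝ => (x, y')) (0, 1) y :=
    (hasDerivAt_const y x).prodMk (hasDerivAt_id y)
  exact ((hl (x, y)).hasFDerivAt.comp_hasDerivAt y h).deriv

theorem kernelOp_uncurry {l : ℝ → ℝ → ℝ} (hl : ContDiff ℝ 3 (Function.uncurry l)) (x y : ℝ) :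
    pdx (pdx (pdx l)) x y + pdy (pdy (pdy l)) x y + pdx l x y + pdy l x y =
      kernelOp (Function.uncurry l) (x, y) := by
  have hd : ∀ {F : ℝ × ℝ → ℝ} {n : ℕ}, ContDiff ℝ (n + 1 : ℕ) F → Differentiable ℝ F :=
    fun h => h.differentiable (by simp)
  have h1 : ContDiff ℝ (1 + 1 : ℕ) (d1 (Function.uncurry l)) := contDiff_d1 (n := 2) hl
  have h2 : ContDiff ℝ (1 + 1 : ℕ) (d2 (Function.uncurry l)) := contDiff_d2 (n := 2) hl
  have hl0 : Differentiable ℝ (Function.uncurry l) := hd (n := 2) hl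
  have ux : ∀ {F : ℝ × ℝ → ℝ}, Differentiable ℝ F →
      pdx (fun x y => F (x, y)) = fun x y => d1 F (x, y) := fun hF => pdx_eq_d1 hF
  have uy : ∀ {F : ℝ × ℝ → ℝ}, Differentiable ℝ F →
      pdy (fun x y => F (x, y)) = fun x y => d2 F (x, y) := fun hF => pdy_eq_d2 hF
  rw [pdx_eq_d1 hl0, pdy_eq_d2 hl0, ux (hd h1), uy (hd h2), ux (hd (contDiff_d1 h1)),
    uy (hd (contDiff_d2 h2))]
  rfl

end

section

variable {lam : ℝ} {μ ϑ α : ℝ → ℂ}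

namespace CharacteristicFamily

/-- A boundary value `h` for which `transport` vanishes on the segment `s = -t`, `t ∈ [0, 1]`. -/
theorem exists_transport_antidiagonal_eq_zero (hF : CharacteristicFamily lam μ ϑ α) :
    ∃ h : ℝ → ℝ, ContDiff ℝ 3 h ∧ h 0 = 0 ∧ deriv h 0 = 0 ∧
      ∀ t ∈ Icc (0 : ℝ) 1, transport μ ϑ α 1 h (-t, t) = 0 := by
  set K : ℝ × ℝ → ℝ := fun p => (superpose μ ϑ 1 0 α p).re with hK
  have hKc : Continuous K := continuous_re.comp (continuous_superpose hF.continuous_mu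
    hF.continuous_theta 1 (g := 0) continuous_const hF.continuous_alpha)
  let χ : ContDiffBump (0 : ℝ) := ⟨2, 3, by norm_num, by norm_num⟩
  have hχ : ContDiff ℝ 3 χ := χ.contDiff
  have hχc : Continuous χ := hχ.continuous
  have hχ1 : ∀ t ∈ Metric.closedBall (0 : ℝ) 2, χ t = 1 := fun t ht => χ.one_of_mem_closedBall ht
  obtain ⟨C, hC⟩ := (isCompact_Icc (a := ((-3, -6) : ℝ × ℝ)) (b := (3, 6))).exists_bound_of_continuousOn
    hKc.continuousOn
  have hC0 : 0 ≤ C := (norm_nonneg _).trans (hC 0 (by constructor <;> constructor <;> norm_num))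
  have hb : ∀ t τ : ℝ, |τ| ≤ |t| → |-(χ t * K (-t, t - τ))| ≤ C := by
    intro t τ hτ
    by_cases ht : |t| ≤ 3
    · rw [abs_neg, abs_mul, abs_of_nonneg χ.nonneg]
      have h1 : |K (-t, t - τ)| ≤ C := by
        refine hC _ ?_
        have := abs_le.1 ht
        have := abs_le.1 (hτ.trans ht)
        constructor <;> constructor <;> simp <;> linarith
      nlinarith [abs_nonneg (K (-t, t - τ)), χ.nonneg' t, χ.le_one (x := t)]
    · have : χ t = 0 := χ.zero_of_le_dist (by simpa using (not_le.1 ht).le)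
      simpa [this] using hC0
  obtain ⟨h, hhc, hh⟩ := exists_volterra_solution (f := fun t => -(χ t * K (-t, t)))
    (k := fun q => -(χ q.1 * K (-q.1, q.1 - q.2))) (B := C) (C := C) (by fun_prop) (by fun_prop)
    (fun t => by simpa using hb t 0 (by simp)) hC0 (fun t τ hτ => hb t τ (by
      rcases le_total 0 t with ht | ht
      · rw [uIoc_of_le ht] at hτ
        rw [abs_of_nonneg ht, abs_of_pos hτ.1]; exact hτ.2
      · rw [uIoc_of_ge ht] at hτ
        rw [abs_of_nonpos ht, abs_of_nonpos hτ.2]; linarith [hτ.1]))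
  have hfix : ∀ t, h t = -(χ t * (superpose μ ϑ 1 h α (-t, t)).re) := by
    intro t
    have h1 := hF.transport_eq_add_integral 1 hhc (-t) t
    rw [transport] at h1
    have h2 : (superpose μ ϑ 1 h α (-t, t)).re = K (-t, t) +
        ∫ τ in (0 : ℝ)..t, K (-t, t - τ) * h τ := by
      simp only [hK]; linarith
    rw [h2, hh t, mul_add, ← intervalIntegral.integral_const_mul, neg_add,
      ← intervalIntegral.integral_neg]
    congr 2
    ext τ; ring
  have hfix' : h = fun t => -(χ t * (superpose μ ϑ 1 h α (-t, t)).re) := funext hfix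
  have hreg : ∀ k : ℕ, k ≤ 3 → ContDiff ℝ k h := by
    intro k
    induction k with
    | zero => intro _; exact contDiff_zero.2 hhc
    | succ k ih =>
      intro hk
      have h1 := contDiff_superpose hF.continuous_mu hF.continuous_theta 1 k (ih (by omega))
        hF.continuous_alpha
      rw [hfix']
      refine ((hχ.of_le (by exact_mod_cast hk)).mul (reCLM.contDiff.comp (h1.comp ?_))).neg
      exact contDiff_neg.prodMk contDiff_id
  have h3 : ContDiff ℝ 3 h := hreg 3 le_rfl
  have h1 : ContDiff ℝ 1 h := hreg 1 (by norm_num)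
  have h0 : h 0 = 0 := by rw [hfix]; simp [hF.superpose_left 1 hhc]
  have hzero : ∀ t ∈ Metric.closedBall (0 : ℝ) 2, transport μ ϑ α 1 h (-t, t) = 0 := by
    intro t ht
    have := hfix t
    rw [hχ1 t ht] at this
    rw [transport]; linarith
  refine ⟨h, h3, h0, ?_, fun t ht => hzero t ?_⟩
  · have hc : HasDerivAt (fun t : ℝ => (-t, t)) (-1, 1) 0 :=
      (hasDerivAt_neg 0).prodMk (hasDerivAt_id 0)
    have hd := (hF.contDiff_transport 1 1 h1).differentiable (by simp) (-0, 0)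
    have hd' : HasDerivAt (fun t : ℝ => transport μ ϑ α 1 h (-t, t))
        (fderiv ℝ (transport μ ϑ α 1 h) (-0, 0) (-1, 1)) 0 :=
      HasFDerivAt.comp_hasDerivAt (f := fun t : ℝ => (-t, t)) 0 hd.hasFDerivAt hc
    have e1 : fderiv ℝ (transport μ ϑ α 1 h) (-0, 0) (-1, 1) = 0 := by
      refine hd'.unique ((hasDerivAt_const (0 : ℝ) (0 : ℝ)).congr_of_eventuallyEq ?_)
      filter_upwards [Metric.closedBall_mem_nhds (0 : ℝ) (ε := 2) (by norm_num)] with t ht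
      exact hzero t ht
    have e2 := hF.d1_transport_bottom 1 h1 0
    have e3 := hF.d2_transport_bottom 1 h1 0
    rw [d1] at e2
    rw [d2] at e3
    have e4 : ((-1, 1) : ℝ × ℝ) = (0, 1) - (1, 0) := by simp
    rw [neg_zero, e4, map_sub, e2, e3] at e1
    simpa using e1
  · rw [Metric.mem_closedBall, Real.dist_eq, sub_zero, abs_of_nonneg ht.1]
    linarith [ht.2]

end CharacteristicFamily

theorem exists_isInverseControllerKernel (hF : CharacteristicFamily lam μ ϑ α) :
    ∃ l, IsInverseControllerKernel lam l := by
  obtain ⟨h, h3, h0, h0', hz⟩ := hF.exists_transport_antidiagonal_eq_zero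
  have h1 : ContDiff ℝ 1 h := h3.of_le (by norm_num)
  set G : ℝ × ℝ → ℝ := fun p => transport μ ϑ α 1 h (p - (2, 0)) with hG
  have hshift : ∀ (F : ℝ × ℝ → ℝ) (p : ℝ × ℝ),
      fderiv ℝ (fun q => F (q - (2, 0))) p = fderiv ℝ F (p - (2, 0)) := fun F p =>
    fderiv_comp_sub _
  have s1 : ∀ F : ℝ × ℝ → ℝ, d1 (fun q => F (q - (2, 0))) = fun q => d1 F (q - (2, 0)) := fun F => by
    ext p; simp [d1, hshift]
  have s2 : ∀ F : ℝ × ℝ → ℝ, d2 (fun q => F (q - (2, 0))) = fun q => d2 F (q - (2, 0)) := fun F => by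
    ext p; simp [d2, hshift]
  have hG3 : ContDiff ℝ 3 G := (hF.contDiff_transport 1 3 h3).comp (contDiff_id.sub contDiff_const)
  have hu : Function.uncurry (fun x y => G (charCoord (x, y))) = G ∘ charCoord := rfl
  have hl : ContDiff ℝ 3 (G ∘ charCoord) := hG3.comp charCoord.contDiff
  refine ⟨fun x y => G (charCoord (x, y)), by rw [hu]; exact hl, fun x y _ => ?_, fun x hx => ?_,
    fun x hx => ?_, fun x hx => ?_⟩
  · rw [kernelOp_uncurry (by rw [hu]; exact hl), hu, kernelOp_comp_charCoord hG3]
    simp only [hG, s1, s2]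
    exact hF.kernelEq_transport 1 h1 _
  · have := hz (1 - x) ⟨by linarith [hx.2], by linarith [hx.1]⟩
    simp only [hG, charCoord_apply, Prod.mk_sub_mk]
    convert this using 3 <;> ring
  · simp only [hG, charCoord_apply, Prod.mk_sub_mk, sub_self]
    rw [hF.transport_bottom 1 h1.continuous, h0]
  · rw [pdx_eq_d1 (by rw [hu]; exact hl.differentiable (by simp)), hu]
    beta_reduce
    rw [d1_comp_charCoord (hG3.differentiable (by simp))]
    simp only [hG, s1, s2, charCoord_apply, Prod.mk_sub_mk, sub_self, Function.comp_apply,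
      Pi.sub_apply]
    rw [hF.d1_transport_bottom 1 h1, hF.d2_transport_bottom 1 h1, h0']
    ring

end

/-- A Cauchy–Pompeiu bound for a compactly supported function in terms of its `∂̄`-derivative. -/
theorem norm_le_of_norm_dbar_le {U : ℂ → ℂ} (hU : ContDiff ℝ 1 U) {ζ₀ : ℂ} {R M : ℝ} (hR : 0 ≤ R)
    (hsupp : ∀ ζ, R ≤ ‖ζ - ζ₀‖ → U ζ = 0)
    (hM : ∀ ζ, ‖fderiv ℝ U ζ 1 + I * fderiv ℝ U ζ I‖ ≤ M) : ‖U ζ₀‖ ≤ R * M := by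
  have hd : ∀ ζ, HasFDerivAt U (fderiv ℝ U ζ) ζ := fun ζ =>
    (hU.differentiable one_ne_zero ζ).hasFDerivAt
  have hDc : Continuous (fderiv ℝ U) := hU.continuous_fderiv one_ne_zero
  set A : ℝ → ℝ → ℂ := fun ρ θ => fderiv ℝ U (ζ₀ + ρ * exp (θ * I)) (exp (θ * I)) with hA
  set B : ℝ → ℝ → ℂ := fun ρ θ => fderiv ℝ U (ζ₀ + ρ * exp (θ * I)) (exp (θ * I) * I) with hB
  have hAc : Continuous fun p : ℝ × ℝ => A p.1 p.2 := by
    simp only [hA]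
    exact (hDc.comp (by fun_prop)).clm_apply (by fun_prop)
  have hBc : Continuous fun p : ℝ × ℝ => B p.1 p.2 := by
    simp only [hB]
    exact (hDc.comp (by fun_prop)).clm_apply (by fun_prop)
  have hAint : ∀ θ, ∫ ρ in (0 : ℝ)..R, A ρ θ = -U ζ₀ := by
    intro θ
    have h1 : ∀ ρ ∈ uIcc 0 R, HasDerivAt (fun ρ : ℝ => U (ζ₀ + ρ * exp (θ * I))) (A ρ θ) ρ := by
      intro ρ _
      have h2 : HasDerivAt (fun ρ : ℝ => ζ₀ + ρ * exp (θ * I)) (exp (θ * I)) ρ := by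
        refine ((ofRealCLM.hasDerivAt.mul_const (exp (θ * I))).const_add ζ₀).congr_deriv ?_
        simp
      exact (hd _).comp_hasDerivAt ρ h2
    rw [intervalIntegral.integral_eq_sub_of_hasDerivAt h1
      (Continuous.intervalIntegrable (hAc.comp (by fun_prop : Continuous fun ρ : ℝ => (ρ, θ))) _ _)]
    rw [hsupp (ζ₀ + R * exp (θ * I)) (by simp [norm_exp_ofReal_mul_I, le_abs_self])]
    simp
  have hBint : ∀ ρ : ℝ, ρ ≠ 0 → ∫ θ in (0 : ℝ)..2 * Real.pi, B ρ θ = 0 := by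
    intro ρ hρ
    have h1 : ∀ θ ∈ uIcc 0 (2 * Real.pi), HasDerivAt
        (fun θ : ℝ => U (ζ₀ + ρ * exp (θ * I))) (ρ * B ρ θ) θ := by
      intro θ _
      have h2 : HasDerivAt (fun θ : ℝ => ζ₀ + ρ * exp (θ * I)) ((ρ : ℝ) • (exp (θ * I) * I)) θ := by
        refine ((((ofRealCLM.hasDerivAt (x := θ)).mul_const I).cexp.const_mul
          (ρ : ℂ)).const_add ζ₀).congr_deriv ?_
        simp
      refine ((hd _).comp_hasDerivAt θ h2).congr_deriv ?_
      rw [map_smul, real_smul]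
    have h3 := intervalIntegral.integral_eq_sub_of_hasDerivAt h1
      (Continuous.intervalIntegrable (continuous_const.mul
        (hBc.comp (by fun_prop : Continuous fun θ : ℝ => (ρ, θ)))) _ _)
    rw [intervalIntegral.integral_const_mul] at h3
    have h4 : exp ((2 * Real.pi : ℝ) * I) = 1 := by push_cast; exact exp_two_pi_mul_I
    rw [h4] at h3
    simp only [ofReal_zero, zero_mul, exp_zero, mul_one, sub_self, mul_eq_zero, ofReal_eq_zero] at h3
    exact h3.resolve_left hρ
  have hAB : ∀ ρ θ, ‖A ρ θ + I * B ρ θ‖ ≤ M := by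
    intro ρ θ
    set L := fderiv ℝ U (ζ₀ + ρ * exp (θ * I)) with hL
    have e1 : exp (θ * I) = Real.cos θ • (1 : ℂ) + Real.sin θ • I := by
      rw [exp_mul_I]; simp
    have e2 : exp (θ * I) * I = (-Real.sin θ) • (1 : ℂ) + Real.cos θ • I := by
      rw [exp_mul_I]; simp [add_mul, mul_assoc]; ring
    have e3 : A ρ θ + I * B ρ θ = exp ((-θ : ℝ) * I) * (L 1 + I * L I) := by
      have ea : A ρ θ = Real.cos θ • L 1 + Real.sin θ • L I := by
        simp only [hA, ← hL]; rw [e1, map_add, map_smul, map_smul]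
      have eb : B ρ θ = (-Real.sin θ) • L 1 + Real.cos θ • L I := by
        simp only [hB, ← hL]; rw [e2, map_add, map_smul, map_smul]
      rw [ea, eb, exp_mul_I]
      simp only [real_smul, ofReal_neg, Complex.cos_neg, Complex.sin_neg, ofReal_cos, ofReal_sin]
      linear_combination (Complex.sin θ * L I) * I_sq
    rw [e3, norm_mul, norm_exp_ofReal_mul_I, one_mul]
    exact hM _
  have hBzero : ∫ ρ in (0 : ℝ)..R, ∫ θ in (0 : ℝ)..2 * Real.pi, B ρ θ = 0 := by
    refine intervalIntegral.integral_zero_ae (ae_of_all _ fun ρ hρ => hBint ρ ?_)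
    rw [uIoc_of_le hR] at hρ
    exact hρ.1.ne'
  have hAtot : ∫ ρ in (0 : ℝ)..R, ∫ θ in (0 : ℝ)..2 * Real.pi, A ρ θ =
      -(2 * Real.pi * U ζ₀) := by
    rw [intervalIntegral_intervalIntegral_swap]
    · simp [hAint]
    · exact (hAc.continuousOn.integrableOn_compact
        (isCompact_Icc.prod isCompact_Icc)).mono_set (prod_mono uIoc_subset_uIcc uIoc_subset_uIcc)
  have hi : ∀ {H : ℝ → ℝ → ℂ}, Continuous (fun p : ℝ × ℝ => H p.1 p.2) → ∀ ρ,
      IntervalIntegrable (H ρ) volume 0 (2 * Real.pi) := fun hH ρ =>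
    Continuous.intervalIntegrable (hH.comp (by fun_prop : Continuous fun θ : ℝ => (ρ, θ))) _ _
  have hii : ∀ {H : ℝ → ℝ → ℂ}, Continuous (fun p : ℝ × ℝ => H p.1 p.2) →
      IntervalIntegrable (fun ρ => ∫ θ in (0 : ℝ)..2 * Real.pi, H ρ θ) volume 0 R := fun hH =>
    (intervalIntegral.continuous_parametric_intervalIntegral_of_continuous' hH _ _).intervalIntegrable
      _ _
  have hsum : ∫ ρ in (0 : ℝ)..R, ∫ θ in (0 : ℝ)..2 * Real.pi, (A ρ θ + I * B ρ θ) =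
      -(2 * Real.pi * U ζ₀) := by
    have h1 : ∀ ρ, ∫ θ in (0 : ℝ)..2 * Real.pi, (A ρ θ + I * B ρ θ) =
        (∫ θ in (0 : ℝ)..2 * Real.pi, A ρ θ) + I * ∫ θ in (0 : ℝ)..2 * Real.pi, B ρ θ := by
      intro ρ
      rw [intervalIntegral.integral_add (hi hAc ρ) ((hi hBc ρ).const_mul I),
        intervalIntegral.integral_const_mul]
    simp only [h1]
    rw [intervalIntegral.integral_add (hii hAc) ((hii hBc).const_mul I),
      intervalIntegral.integral_const_mul, hBzero, hAtot]
    simp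
  have h1 : ∀ ρ, ‖∫ θ in (0 : ℝ)..2 * Real.pi, (A ρ θ + I * B ρ θ)‖ ≤ M * (2 * Real.pi) := by
    intro ρ
    have := intervalIntegral.norm_integral_le_of_norm_le_const (a := 0) (b := 2 * Real.pi)
      (f := fun θ => A ρ θ + I * B ρ θ) (fun θ _ => hAB ρ θ)
    rwa [sub_zero, abs_of_pos Real.two_pi_pos] at this
  have h2 := intervalIntegral.norm_integral_le_of_norm_le_const (a := 0) (b := R)
    (f := fun ρ => ∫ θ in (0 : ℝ)..2 * Real.pi, (A ρ θ + I * B ρ θ)) (fun ρ _ => h1 ρ)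
  rw [hsum, sub_zero, abs_of_nonneg hR, norm_neg, norm_mul, norm_mul, Complex.norm_ofNat, norm_real,
    Real.norm_of_nonneg Real.pi_pos.le] at h2
  have := Real.pi_pos
  refine le_of_mul_le_mul_left (a := 2 * Real.pi) ?_ (by positivity)
  linarith

/-- The real part of `ζ ^ (3 / 2)`, written so that it is continuous on the whole plane. It is
positive exactly on the sector `‖ζ‖ < 2 * ζ.re`. -/
def sectorWeight (ζ : ℂ) : ℝ := √((‖ζ‖ + ζ.re) / 2) * (2 * ζ.re - ‖ζ‖)

theorem continuous_sectorWeight : Continuous sectorWeight := by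
  unfold sectorWeight; fun_prop

theorem sectorWeight_pos_iff {ζ : ℂ} : 0 < sectorWeight ζ ↔ ‖ζ‖ < 2 * ζ.re := by
  constructor
  · intro h
    have := pos_of_mul_pos_right h (Real.sqrt_nonneg _)
    linarith
  · intro h
    have h0 := norm_nonneg ζ
    exact mul_pos (Real.sqrt_pos.2 (by linarith)) (by linarith)

theorem le_sectorWeight_add {ζ : ℂ} {c ρ h : ℝ} (hc : 0 < c) (hζ : c ≤ sectorWeight ζ)
    (hρ : ζ.re ≤ ρ) (hh : 0 ≤ h) : sectorWeight ζ + c / ρ * h ≤ sectorWeight (ζ + h) := by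
  have hs := sectorWeight_pos_iff.1 (hc.trans_le hζ)
  have hn := norm_nonneg ζ
  have hre : 0 < ζ.re := by linarith
  have hρ0 : 0 < ρ := by linarith
  have hre' : ζ.re ≤ ‖ζ‖ := re_le_norm ζ
  set a := √((‖ζ‖ + ζ.re) / 2) with ha
  have ha0 : 0 ≤ a := Real.sqrt_nonneg _
  have hac : c / ρ ≤ a := by
    rw [div_le_iff₀ hρ0]
    have : c ≤ a * (2 * ζ.re - ‖ζ‖) := hζ
    nlinarith
  have hup : ‖ζ + h‖ ≤ ‖ζ‖ + h := (norm_add_le _ _).trans (by simp [abs_of_nonneg hh])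
  have hlow : ‖ζ‖ ≤ ‖ζ + h‖ := by
    rw [norm_eq_sqrt_sq_add_sq, norm_eq_sqrt_sq_add_sq]
    refine Real.sqrt_le_sqrt ?_
    simp only [add_re, ofReal_re, add_im, ofReal_im, add_zero]
    nlinarith
  have haa : a ≤ √((‖ζ + h‖ + (ζ + h).re) / 2) := by
    refine Real.sqrt_le_sqrt ?_
    simp only [add_re, ofReal_re]
    linarith
  have h1 : sectorWeight ζ + a * h ≤ sectorWeight (ζ + h) := by
    calc sectorWeight ζ + a * h = a * (2 * ζ.re - ‖ζ‖ + h) := by rw [sectorWeight]; ring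
      _ ≤ √((‖ζ + h‖ + (ζ + h).re) / 2) * (2 * (ζ + h).re - ‖ζ + h‖) := by
        refine mul_le_mul haa ?_ (by linarith) (Real.sqrt_nonneg _)
        simp only [add_re, ofReal_re]
        linarith
  nlinarith

theorem sectorWeight_le_of_abs_im_le {x y y' : ℝ} (hy : |y| ≤ |y'|)
    (h : 0 < sectorWeight ⟨x, y'⟩) : sectorWeight ⟨x, y'⟩ ≤ sectorWeight ⟨x, y⟩ := by
  have hs := sectorWeight_pos_iff.1 h
  set r := ‖(⟨x, y⟩ : ℂ)‖ with hr
  set r' := ‖(⟨x, y'⟩ : ℂ)‖ with hr'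
  have hxr : x ≤ r := re_le_norm (⟨x, y⟩ : ℂ)
  have hrr : r ≤ r' := by
    rw [hr, hr', norm_eq_sqrt_sq_add_sq, norm_eq_sqrt_sq_add_sq]
    refine Real.sqrt_le_sqrt ?_
    have := sq_le_sq.2 hy
    simp only
    linarith
  have hr0 : 0 ≤ r := norm_nonneg _
  have hs' : r' < 2 * x := hs
  refine abs_le_of_sq_le_sq' ?_ ?_ |>.2
  · have e : ∀ s : ℝ, 0 ≤ s → 0 ≤ x → (√((s + x) / 2) * (2 * x - s)) ^ 2 =
        (s + x) / 2 * (2 * x - s) ^ 2 := by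
      intro s hs hx
      rw [mul_pow, Real.sq_sqrt (by positivity)]
    have hx : 0 ≤ x := by linarith
    simp only [sectorWeight, ← hr, ← hr']
    rw [e r hr0 hx, e r' (by linarith) hx]
    have hb : 0 ≤ 3 * x * (r + r') - r ^ 2 - r * r' - r' ^ 2 := by
      nlinarith [mul_nonneg hr0 (by linarith : 0 ≤ 2 * x - r),
        mul_nonneg (hr0.trans hrr) (by linarith : 0 ≤ 2 * x - r'),
        mul_nonneg hr0 (by linarith : 0 ≤ 2 * x - r'),
        mul_nonneg (hr0.trans hrr) (by linarith : 0 ≤ 2 * x - r)]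
    linarith [mul_nonneg (sub_nonneg.2 hrr) hb]
  · exact mul_nonneg (Real.sqrt_nonneg _) (by simp only [← hr]; linarith)

theorem mem_slitPlane_of_norm_lt {ζ : ℂ} (h : ‖ζ‖ < 2 * ζ.re) : ζ ∈ slitPlane :=
  Or.inl (by linarith [norm_nonneg ζ])

/-- The holomorphic Carleman weight `exp (τ ζ ^ (3 / 2))`. -/
def carlemanWeight (τ : ℝ) (ζ : ℂ) : ℂ := exp (τ * (ζ ^ (1 / 2 : ℂ)) ^ 3)

theorem norm_carlemanWeight {ζ : ℂ} (h : ‖ζ‖ < 2 * ζ.re) (τ : ℝ) :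
    ‖carlemanWeight τ ζ‖ = Real.exp (τ * sectorWeight ζ) := by
  have hn := norm_nonneg ζ
  have hz : ζ ≠ 0 := slitPlane_ne_zero (mem_slitPlane_of_norm_lt h)
  set q := ζ ^ (1 / 2 : ℂ) with hq
  have hq2 : q ^ 2 = ζ := by
    rw [hq, ← cpow_nat_mul]; simp
  have hre : 0 ≤ q.re := by
    rw [hq, cpow_def_of_ne_zero hz, exp_re]
    refine mul_nonneg (Real.exp_pos _).le (Real.cos_nonneg_of_mem_Icc ?_)
    have h1 := arg_le_pi ζ
    have h2 := neg_pi_lt_arg ζ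
    have : (log ζ * (1 / 2)).im = arg ζ / 2 := by
      rw [show (1 / 2 : ℂ) = ((1 / 2 : ℝ) : ℂ) by push_cast; rfl, im_mul_ofReal, log_im]; ring
    rw [this]
    constructor <;> linarith
  have h1 : q.re ^ 2 - q.im ^ 2 = ζ.re := by
    rw [← hq2]; simp [sq]
  have h2 : q.re ^ 2 + q.im ^ 2 = ‖ζ‖ := by
    rw [← hq2, norm_pow, ← normSq_eq_norm_sq, normSq_apply]; ring
  have h3 : √((‖ζ‖ + ζ.re) / 2) = q.re := by
    rw [← h1, ← h2, show (q.re ^ 2 + q.im ^ 2 + (q.re ^ 2 - q.im ^ 2)) / 2 = q.re ^ 2 by ring,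
      Real.sqrt_sq hre]
  rw [carlemanWeight, norm_exp, re_ofReal_mul, sectorWeight, h3, ← h1, ← h2, ← hq]
  congr 2
  simp [pow_succ]
  ring

theorem differentiableAt_carlemanWeight {ζ : ℂ} (h : ‖ζ‖ < 2 * ζ.re) (τ : ℝ) :
    DifferentiableAt ℂ (carlemanWeight τ) ζ :=
  (((differentiableAt_id.cpow_const (mem_slitPlane_of_norm_lt h)).pow 3).const_mul _).cexp

theorem isOpen_sector : IsOpen {ζ : ℂ | ‖ζ‖ < 2 * ζ.re} :=
  isOpen_lt continuous_norm (by fun_prop)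

theorem contDiffAt_carlemanWeight {ζ : ℂ} (h : ‖ζ‖ < 2 * ζ.re) (τ : ℝ) :
    ContDiffAt ℝ 1 (carlemanWeight τ) ζ := by
  have h1 : DifferentiableOn ℂ (carlemanWeight τ) {ζ : ℂ | ‖ζ‖ < 2 * ζ.re} := fun z hz =>
    (differentiableAt_carlemanWeight hz τ).differentiableWithinAt
  exact ((h1.contDiffOn isOpen_sector).contDiffAt (isOpen_sector.mem_nhds h)).restrict_scalars ℝ

theorem contDiffAt_sectorWeight {ζ : ℂ} (h : ‖ζ‖ < 2 * ζ.re) : ContDiffAt ℝ 1 sectorWeight ζ := by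
  have hz : ζ ≠ 0 := slitPlane_ne_zero (mem_slitPlane_of_norm_lt h)
  have h1 : ContDiffAt ℝ 1 (fun ζ : ℂ => ‖ζ‖) ζ := contDiffAt_norm ℝ hz
  have h2 : ContDiffAt ℝ 1 (fun ζ : ℂ => ζ.re) ζ := reCLM.contDiff.contDiffAt
  refine ContDiffAt.mul (ContDiffAt.sqrt ((h1.add h2).div_const 2) ?_)
    ((contDiffAt_const.mul h2).sub h1)
  have := norm_nonneg ζ
  have : 0 < (‖ζ‖ + ζ.re) / 2 := by linarith
  exact this.ne'

/-- Extending a function by zero across a line on which it vanishes to first order. -/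
theorem hasFDerivAt_indicator_re_le {u : ℂ → ℂ} (hu : Differentiable ℝ u) {ρ : ℝ} {ζ : ℂ}
    (hline : ζ.re = ρ → u ζ = 0 ∧ fderiv ℝ u ζ = 0) :
    HasFDerivAt ({ζ : ℂ | ζ.re ≤ ρ}.indicator u)
      ({ζ : ℂ | ζ.re ≤ ρ}.indicator (fderiv ℝ u) ζ) ζ := by
  rcases lt_trichotomy ζ.re ρ with h | h | h
  · rw [indicator_of_mem (by exact h.le)]
    refine (hu ζ).hasFDerivAt.congr_of_eventuallyEq ?_
    filter_upwards [(isOpen_lt continuous_re continuous_const).mem_nhds h] with z hz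
    exact indicator_of_mem (by exact le_of_lt hz) _
  · obtain ⟨h0, h1⟩ := hline h
    rw [indicator_of_mem (by exact h.le), h1]
    have hd := (hu ζ).hasFDerivAt
    rw [h1] at hd
    have a1 : HasFDerivWithinAt ({ζ : ℂ | ζ.re ≤ ρ}.indicator u) (0 : ℂ →L[ℝ] ℂ)
        {ζ : ℂ | ζ.re ≤ ρ} ζ :=
      hd.hasFDerivWithinAt.congr (fun z hz => indicator_of_mem hz _) (indicator_of_mem (by exact h.le) _)
    have a2 : HasFDerivWithinAt ({ζ : ℂ | ζ.re ≤ ρ}.indicator u) (0 : ℂ →L[ℝ] ℂ)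
        {ζ : ℂ | ζ.re ≤ ρ}ᶜ ζ :=
      (hasFDerivWithinAt_const (0 : ℂ) ζ _).congr (fun z hz => indicator_of_notMem hz _)
        (by rw [indicator_of_mem (by exact h.le), h0])
    have := a1.union a2
    rwa [union_compl_self, hasFDerivWithinAt_univ] at this
  · rw [indicator_of_notMem (by simpa using h)]
    refine (hasFDerivAt_const (0 : ℂ) ζ).congr_of_eventuallyEq ?_
    filter_upwards [(isOpen_lt continuous_const continuous_re).mem_nhds h] with z hz
    exact indicator_of_notMem (by simpa using hz) _

theorem contDiffAt_indicator_re_le {u : ℂ → ℂ} (hu : ContDiff ℝ 1 u) {ρ : ℝ} {s : Set ℂ}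
    (hs : IsOpen s) (hline : ∀ ζ ∈ s, ζ.re = ρ → u ζ = 0 ∧ fderiv ℝ u ζ = 0) {ζ : ℂ}
    (hζ : ζ ∈ s) : ContDiffAt ℝ 1 ({ζ : ℂ | ζ.re ≤ ρ}.indicator u) ζ := by
  classical
  rw [contDiffAt_one_iff]
  refine ⟨{ζ : ℂ | ζ.re ≤ ρ}.indicator (fderiv ℝ u), s, hs.mem_nhds hζ, ?_, fun z hz =>
    hasFDerivAt_indicator_re_le (hu.differentiable one_ne_zero) (hline z hz)⟩
  have hc : Continuous (fderiv ℝ u) := hu.continuous_fderiv one_ne_zero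
  have : ContinuousOn (fun z => if z.re ≤ ρ then fderiv ℝ u z else 0) s := by
    refine ContinuousOn.if (fun z hz => (hline z hz.1 ?_).2) hc.continuousOn continuousOn_const
    have := frontier_le_subset_eq continuous_re continuous_const hz.2
    exact this
  refine this.congr fun z _ => ?_
  simp [indicator_apply]

/-- A cut-off, along the level sets of `sectorWeight`, of a function on a truncated sector which
vanishes to first order on the truncating line. -/
theorem exists_sector_cutoff {u : ℂ → ℂ} (hu : ContDiff ℝ 1 u) {ρ c₁ c₂ : ℝ} (hc₂ : 0 < c₂)
    (hc : c₂ < c₁)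
    (hline : ∀ ζ : ℂ, ‖ζ‖ < 2 * ζ.re → ζ.re = ρ → u ζ = 0 ∧ fderiv ℝ u ζ = 0) :
    ∃ g : ℂ → ℂ, ContDiff ℝ 1 g ∧ (∀ ζ, g ζ ≠ 0 → c₂ ≤ sectorWeight ζ ∧ ζ.re ≤ ρ) ∧
      (∀ ζ, c₁ ≤ sectorWeight ζ → ζ.re ≤ ρ → g ζ = u ζ) ∧
      ∀ ζ, c₁ < sectorWeight ζ → ζ.re ≤ ρ → fderiv ℝ g ζ = fderiv ℝ u ζ := by
  set χ : ℂ → ℝ := fun ζ => Real.smoothTransition ((sectorWeight ζ - c₂) / (c₁ - c₂)) with hχ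
  have hd : 0 < c₁ - c₂ := sub_pos.2 hc
  have hχ1 : ∀ ζ, c₁ ≤ sectorWeight ζ → χ ζ = 1 := fun ζ h =>
    Real.smoothTransition.one_of_one_le ((one_le_div hd).2 (by linarith))
  have hχ0 : ∀ ζ, sectorWeight ζ ≤ c₂ → χ ζ = 0 := fun ζ h =>
    Real.smoothTransition.zero_of_nonpos (div_nonpos_of_nonpos_of_nonneg (by linarith) hd.le)
  set w := {ζ : ℂ | ζ.re ≤ ρ}.indicator u with hw
  refine ⟨fun ζ => χ ζ • w ζ, ?_, ?_, ?_, ?_⟩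
  · rw [contDiff_iff_contDiffAt]
    intro ζ
    by_cases hζ : ‖ζ‖ < 2 * ζ.re
    · have h1 : ContDiffAt ℝ 1 χ ζ := Real.smoothTransition.contDiffAt.comp ζ
        (((contDiffAt_sectorWeight hζ).sub contDiffAt_const).div_const _)
      exact h1.smul (contDiffAt_indicator_re_le hu isOpen_sector hline hζ)
    · have h1 : sectorWeight ζ < c₂ := (not_lt.1 (mt sectorWeight_pos_iff.1 hζ)).trans_lt hc₂
      refine (contDiffAt_const (c := (0 : ℂ))).congr_of_eventuallyEq ?_
      filter_upwards [(isOpen_lt continuous_sectorWeight continuous_const).mem_nhds h1] with z hz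
      simp [hχ0 z (le_of_lt hz)]
  · intro ζ h
    constructor
    · by_contra! hlt
      simp [hχ0 ζ hlt.le] at h
    · by_contra! hlt
      exact h (by simp [hw, hlt])
  · intro ζ h1 h2
    simp only [hχ1 ζ h1, hw, one_smul]
    exact indicator_of_mem (by exact h2) _
  · intro ζ h1 h2
    have hζ : ‖ζ‖ < 2 * ζ.re := sectorWeight_pos_iff.1 (hc₂.trans (hc.trans h1))
    have h3 := hasFDerivAt_indicator_re_le (hu.differentiable one_ne_zero) (hline ζ hζ)
    rw [indicator_of_mem (by exact h2)] at h3
    refine (h3.congr_of_eventuallyEq ?_).fderiv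
    filter_upwards [(isOpen_lt continuous_const continuous_sectorWeight).mem_nhds h1] with z hz
    simp [hχ1 z (le_of_lt hz), hw]

theorem abs_le_div_of_abs_deriv_le_exp {f f' : ℝ → ℝ} {A b H : ℝ} (hb : 0 < b) (hH : 0 ≤ H)
    (hf : ∀ h, HasDerivAt f (f' h) h) (hc : Continuous f') (hfH : f H = 0)
    (hA : ∀ h ∈ Icc 0 H, |f' h| ≤ A * Real.exp (-(b * h))) : |f 0| ≤ A / b := by
  have hA0 : 0 ≤ A := by
    have := (abs_nonneg _).trans (hA 0 ⟨le_rfl, hH⟩)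
    simpa using this
  have h1 : ∫ h in (0 : ℝ)..H, f' h = -f 0 := by
    rw [intervalIntegral.integral_eq_sub_of_hasDerivAt (fun h _ => hf h) (hc.intervalIntegrable _ _),
      hfH, zero_sub]
  have h2 : ∫ h in (0 : ℝ)..H, A * Real.exp (-(b * h)) = A / b * (1 - Real.exp (-(b * H))) := by
    have hd : ∀ h ∈ uIcc 0 H, HasDerivAt (fun h => -(A / b) * Real.exp (-(b * h)))
        (A * Real.exp (-(b * h))) h := by
      intro h _
      refine (((hasDerivAt_id h).const_mul b).neg.exp.const_mul (-(A / b))).congr_deriv ?_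
      simp only [id, Pi.neg_apply]
      field_simp
    rw [intervalIntegral.integral_eq_sub_of_hasDerivAt hd
      (Continuous.intervalIntegrable (by fun_prop) _ _)]
    simp
    ring
  have h3 := intervalIntegral.norm_integral_le_of_norm_le (μ := volume) (f := f')
    (g := fun h => A * Real.exp (-(b * h))) hH
    (ae_of_all _ fun h hh => hA h ⟨hh.1.le, hh.2⟩)
    (Continuous.intervalIntegrable (by fun_prop) _ _)
  rw [h1, h2, norm_neg, Real.norm_eq_abs] at h3
  have := Real.exp_pos (-(b * H))
  have : 0 ≤ A / b := by positivity
  nlinarith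

/-- The `∂̄`-derivative of a product with the holomorphic Carleman weight. -/
theorem contDiff_carlemanWeight_mul {g : ℂ → ℂ} (hg : ContDiff ℝ 1 g) {c : ℝ} (hc : 0 < c)
    (hsupp : ∀ ζ, g ζ ≠ 0 → c ≤ sectorWeight ζ) (τ : ℝ) :
    ContDiff ℝ 1 (fun ζ => carlemanWeight τ ζ * g ζ) ∧
      ∀ ζ, ‖fderiv ℝ (fun ζ => carlemanWeight τ ζ * g ζ) ζ 1 +
        I * fderiv ℝ (fun ζ => carlemanWeight τ ζ * g ζ) ζ I‖ =
        Real.exp (τ * sectorWeight ζ) * ‖fderiv ℝ g ζ 1 + I * fderiv ℝ g ζ I‖ := by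
  have hout : ∀ ζ : ℂ, ¬ ‖ζ‖ < 2 * ζ.re → ∀ᶠ z in 𝓝 ζ, g z = 0 := by
    intro ζ hζ
    have h1 : sectorWeight ζ < c := (not_lt.1 (mt sectorWeight_pos_iff.1 hζ)).trans_lt hc
    filter_upwards [(isOpen_lt continuous_sectorWeight continuous_const).mem_nhds h1] with z hz
    by_contra h
    exact absurd (hsupp z h) (not_le.2 hz)
  constructor
  · rw [contDiff_iff_contDiffAt]
    intro ζ
    by_cases hζ : ‖ζ‖ < 2 * ζ.re
    · exact (contDiffAt_carlemanWeight hζ τ).mul hg.contDiffAt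
    · refine (contDiffAt_const (c := (0 : ℂ))).congr_of_eventuallyEq ?_
      filter_upwards [hout ζ hζ] with z hz
      simp [hz]
  · intro ζ
    by_cases hζ : ‖ζ‖ < 2 * ζ.re
    · have hE := (differentiableAt_carlemanWeight hζ τ).hasDerivAt.hasFDerivAt.restrictScalars ℝ
      have hgd := (hg.differentiable one_ne_zero ζ).hasFDerivAt
      rw [show (fun ζ => carlemanWeight τ ζ * g ζ) = carlemanWeight τ * g from rfl,
        (hE.mul hgd).fderiv, ← norm_carlemanWeight hζ, ← norm_mul]
      congr 1
      simp
      linear_combination (deriv (carlemanWeight τ) ζ * g ζ) * I_sq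
    · have e1 : fderiv ℝ (fun ζ => carlemanWeight τ ζ * g ζ) ζ = 0 := by
        refine HasFDerivAt.fderiv ((hasFDerivAt_const (0 : ℂ) ζ).congr_of_eventuallyEq ?_)
        filter_upwards [hout ζ hζ] with z hz
        simp [hz]
      have e2 : fderiv ℝ g ζ = 0 :=
        HasFDerivAt.fderiv ((hasFDerivAt_const (0 : ℂ) ζ).congr_of_eventuallyEq (hout ζ hζ))
      simp [e1, e2]

theorem isCompact_sectorWeight_ge {c ρ : ℝ} (hc : 0 < c) :
    IsCompact {ζ : ℂ | c ≤ sectorWeight ζ ∧ ζ.re ≤ ρ} := by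
  refine Metric.isCompact_of_isClosed_isBounded
    ((isClosed_le continuous_const continuous_sectorWeight).inter
      (isClosed_le continuous_re continuous_const)) ?_
  refine Metric.isBounded_closedBall (x := (0 : ℂ)) (r := 2 * ρ) |>.subset fun ζ hζ => ?_
  have := sectorWeight_pos_iff.1 (hc.trans_le hζ.1)
  simp only [Metric.mem_closedBall, dist_zero_right]
  linarith [hζ.2]

/-- Unique continuation across a truncated sector from Cauchy data on the truncating segment. -/
theorem eq_zero_of_norm_dbar_le {u : ℂ → ℂ} {v V : ℂ → ℝ} {ρ C₀ : ℝ} (hu : ContDiff ℝ 1 u)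
    (hC₀ : 0 ≤ C₀)
    (hv : ∀ (ζ : ℂ) (h : ℝ), HasDerivAt (fun h : ℝ => v (ζ + h)) (u (ζ + h)).re h)
    (hV : ∀ x y : ℝ, HasDerivAt (fun y => V ⟨x, y⟩) (v ⟨x, y⟩) y)
    (hdbar : ∀ ζ : ℂ, ‖ζ‖ < 2 * ζ.re → ζ.re ≤ ρ →
      ‖fderiv ℝ u ζ 1 + I * fderiv ℝ u ζ I‖ ≤ C₀ * (|v ζ| + |V ζ|))
    (hline : ∀ ζ : ℂ, ‖ζ‖ < 2 * ζ.re → ζ.re = ρ → u ζ = 0 ∧ fderiv ℝ u ζ = 0)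
    (hvline : ∀ ζ : ℂ, ‖ζ‖ < 2 * ζ.re → ζ.re = ρ → v ζ = 0)
    (hV0 : ∀ x ∈ Ioc 0 ρ, V ⟨x, 0⟩ = 0) :
    ∀ ζ : ℂ, ‖ζ‖ < 2 * ζ.re → ζ.re ≤ ρ → V ζ = 0 := by
  have huc : Continuous u := hu.continuous
  -- The pointwise estimates of `v` and `V` by the weighted maximum of `u`.
  have est : ∀ {c τ M : ℝ}, 0 < c → 0 < τ →
      (∀ ζ : ℂ, c ≤ sectorWeight ζ → ζ.re ≤ ρ → Real.exp (τ * sectorWeight ζ) * ‖u ζ‖ ≤ M) →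
      ∀ ζ : ℂ, c ≤ sectorWeight ζ → ζ.re ≤ ρ →
        |v ζ| ≤ M * Real.exp (-(τ * sectorWeight ζ)) / (τ * (c / ρ)) ∧
        |V ζ| ≤ M * Real.exp (-(τ * sectorWeight ζ)) / (τ * (c / ρ)) * (2 * ρ) := by
    intro c τ M hc hτ hM
    have hvb : ∀ ζ : ℂ, c ≤ sectorWeight ζ → ζ.re ≤ ρ →
        |v ζ| ≤ M * Real.exp (-(τ * sectorWeight ζ)) / (τ * (c / ρ)) := by
      intro ζ hζ hρ
      have hs := sectorWeight_pos_iff.1 (hc.trans_le hζ)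
      have hn := norm_nonneg ζ
      have hρ0 : 0 < ρ := by linarith
      have hgrow : ∀ h : ℝ, 0 ≤ h → sectorWeight ζ + c / ρ * h ≤ sectorWeight (ζ + h) := fun h hh =>
        le_sectorWeight_add hc hζ hρ hh
      have hpos : ∀ h : ℝ, 0 ≤ h → c ≤ sectorWeight (ζ + h) := fun h hh => by
        have := hgrow h hh
        have : 0 ≤ c / ρ * h := by positivity
        linarith
      have hend : v (ζ + (ρ - ζ.re : ℝ)) = 0 := by
        refine hvline _ (sectorWeight_pos_iff.1 (hc.trans_le (hpos _ (by linarith)))) ?_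
        simp
      have := abs_le_div_of_abs_deriv_le_exp (f := fun h : ℝ => v (ζ + h))
        (f' := fun h : ℝ => (u (ζ + h)).re) (A := M * Real.exp (-(τ * sectorWeight ζ)))
        (b := τ * (c / ρ)) (H := ρ - ζ.re) (by positivity) (by linarith) (hv ζ) (by fun_prop) hend ?_
      · simpa using this
      · intro h hh
        have h1 := hM (ζ + h) (hpos h hh.1) (by simp; linarith [hh.2])
        have h2 : ‖u (ζ + h)‖ ≤ M * Real.exp (-(τ * sectorWeight (ζ + h))) := by
          rw [Real.exp_neg, ← div_eq_mul_inv, le_div_iff₀ (Real.exp_pos _)]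
          linarith
        have hM0 : 0 ≤ M := le_trans (by positivity) h1
        refine (abs_re_le_norm _).trans (h2.trans ?_)
        rw [mul_assoc, ← Real.exp_add]
        refine mul_le_mul_of_nonneg_left (Real.exp_le_exp.2 ?_) hM0
        have := mul_le_mul_of_nonneg_left (hgrow h hh.1) hτ.le
        linarith
    intro ζ hζ hρ
    refine ⟨hvb ζ hζ hρ, ?_⟩
    have hs := sectorWeight_pos_iff.1 (hc.trans_le hζ)
    have hn := norm_nonneg ζ
    have hρ0 : 0 < ρ := by linarith
    have hM0 : 0 ≤ M := le_trans (by positivity) (hM ζ hζ hρ)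
    set B := M * Real.exp (-(τ * sectorWeight ζ)) / (τ * (c / ρ)) with hB
    have hB0 : 0 ≤ B := by positivity
    have hvb' : ∀ y ∈ uIcc 0 ζ.im, ‖v ⟨ζ.re, y⟩‖ ≤ B := by
      intro y hy
      have hyy : |y| ≤ |ζ.im| := by
        have := abs_sub_left_of_mem_uIcc hy
        simpa using this
      have hmono : sectorWeight ζ ≤ sectorWeight ⟨ζ.re, y⟩ :=
        sectorWeight_le_of_abs_im_le (y' := ζ.im) hyy (hc.trans_le hζ)
      refine (hvb ⟨ζ.re, y⟩ (hζ.trans hmono) hρ).trans ?_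
      rw [hB]
      gcongr
    have := (convex_uIcc (0 : ℝ) ζ.im).norm_image_sub_le_of_norm_hasDerivWithin_le
      (fun y _ => (hV ζ.re y).hasDerivWithinAt) hvb' left_mem_uIcc right_mem_uIcc
    rw [hV0 ζ.re ⟨by linarith, hρ⟩, sub_zero, sub_zero, Real.norm_eq_abs, Real.norm_eq_abs] at this
    refine this.trans (mul_le_mul_of_nonneg_left ?_ hB0)
    have := abs_im_le_norm ζ
    linarith
  have hu0 : ∀ ζ : ℂ, ‖ζ‖ < 2 * ζ.re → ζ.re ≤ ρ → u ζ = 0 := by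
    intro ζ₀ hζ₀ hρ₀
    have hρ0 : 0 < ρ := by linarith [norm_nonneg ζ₀]
    set c₁ := sectorWeight ζ₀ / 2 with hc₁
    have hψ : 0 < sectorWeight ζ₀ := sectorWeight_pos_iff.2 hζ₀
    have hc₁0 : 0 < c₁ := by positivity
    obtain ⟨g, hg, hgs, hgu, hgd⟩ := exists_sector_cutoff hu (half_pos hc₁0)
      (half_lt_self hc₁0) hline
    have hgd0 : ∀ ζ : ℂ, ρ < ζ.re → fderiv ℝ g ζ = 0 := by
      intro ζ hζ
      refine HasFDerivAt.fderiv ((hasFDerivAt_const (0 : ℂ) ζ).congr_of_eventuallyEq ?_)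
      filter_upwards [(isOpen_lt continuous_const continuous_re).mem_nhds hζ] with z hz
      by_contra h
      exact absurd (hgs z h).2 (not_le.2 hz)
    have hgn : ∀ ζ, g ζ ≠ 0 → ‖ζ‖ ≤ 2 * ρ := fun ζ h => by
      have h1 := hgs ζ h
      have h2 := sectorWeight_pos_iff.1 ((half_pos hc₁0).trans_le h1.1)
      linarith [h1.2]
    obtain ⟨C', hC'⟩ : ∃ C', ∀ ζ, ‖fderiv ℝ g ζ 1 + I * fderiv ℝ g ζ I‖ ≤ C' := by
      have hcomp : HasCompactSupport g := by
        refine HasCompactSupport.of_support_subset_isCompact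
          (isCompact_sectorWeight_ge (c := c₁ / 2) (ρ := ρ) (half_pos hc₁0)) fun ζ h => hgs ζ h
      obtain ⟨D, hD⟩ := (hcomp.fderiv ℝ).exists_bound_of_continuous
        (hg.continuous_fderiv one_ne_zero)
      refine ⟨D + D, fun ζ => (norm_add_le _ _).trans (add_le_add ?_ ?_)⟩
      · exact ((fderiv ℝ g ζ).le_opNorm 1).trans (by simpa using hD ζ)
      · rw [norm_mul, norm_I, one_mul]
        exact ((fderiv ℝ g ζ).le_opNorm I).trans (by simpa using hD ζ)
    have hC'0 : 0 ≤ C' := (norm_nonneg _).trans (hC' 0)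
    set R := 4 * ρ + 1 with hR
    have hR0 : 0 < R := by positivity
    set C₃ := C₀ * (1 + 2 * ρ) / (c₁ / ρ) with hC₃
    have hC₃0 : 0 ≤ C₃ := by positivity
    have key : ∀ τ : ℝ, 0 < τ → 2 * R * C₃ ≤ τ →
        ‖u ζ₀‖ ≤ 2 * R * C' * Real.exp (-(τ * c₁)) := by
      intro τ hτ hτC
      obtain ⟨ζ₁, hζ₁, hmax⟩ := (isCompact_sectorWeight_ge (ρ := ρ) hc₁0).exists_isMaxOn
        ⟨ζ₀, by rw [hc₁]; linarith, hρ₀⟩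
        (f := fun ζ => Real.exp (τ * sectorWeight ζ) * ‖u ζ‖)
        (by have := continuous_sectorWeight; fun_prop)
      set M := Real.exp (τ * sectorWeight ζ₁) * ‖u ζ₁‖ with hM
      have hM0 : 0 ≤ M := by positivity
      have hmax' : ∀ ζ : ℂ, c₁ ≤ sectorWeight ζ → ζ.re ≤ ρ →
          Real.exp (τ * sectorWeight ζ) * ‖u ζ‖ ≤ M := fun ζ h1 h2 => hmax ⟨h1, h2⟩
      have hest := est hc₁0 hτ hmax'
      obtain ⟨hU, hUd⟩ := contDiff_carlemanWeight_mul hg (half_pos hc₁0) (fun ζ h => (hgs ζ h).1) τ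
      have hbound : ∀ ζ, ‖fderiv ℝ (fun ζ => carlemanWeight τ ζ * g ζ) ζ 1 +
          I * fderiv ℝ (fun ζ => carlemanWeight τ ζ * g ζ) ζ I‖ ≤
          C₃ * M / τ + C' * Real.exp (τ * c₁) := by
        intro ζ
        rw [hUd]
        have hpos1 : 0 ≤ C₃ * M / τ := by positivity
        have hpos2 : 0 ≤ C' * Real.exp (τ * c₁) := by positivity
        rcases le_or_gt (sectorWeight ζ) c₁ with h | h
        · have : Real.exp (τ * sectorWeight ζ) * ‖fderiv ℝ g ζ 1 + I * fderiv ℝ g ζ I‖ ≤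
              Real.exp (τ * c₁) * C' := by
            gcongr
            exact hC' ζ
          linarith
        · rcases le_or_gt ζ.re ρ with hρ | hρ
          · obtain ⟨e1, e2⟩ := hest ζ h.le hρ
            rw [hgd ζ h hρ]
            have e3 := hdbar ζ (sectorWeight_pos_iff.1 (hc₁0.trans h)) hρ
            have e4 : Real.exp (τ * sectorWeight ζ) * ‖fderiv ℝ u ζ 1 + I * fderiv ℝ u ζ I‖ ≤
                C₃ * M / τ := by
              calc _ ≤ Real.exp (τ * sectorWeight ζ) * (C₀ *
                    (M * Real.exp (-(τ * sectorWeight ζ)) / (τ * (c₁ / ρ)) +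
                      M * Real.exp (-(τ * sectorWeight ζ)) / (τ * (c₁ / ρ)) * (2 * ρ))) := by
                    gcongr
                    exact e3.trans (by gcongr)
                _ = C₃ * M / τ := by
                    rw [Real.exp_neg, hC₃]
                    have := (Real.exp_pos (τ * sectorWeight ζ)).ne'
                    field_simp
            linarith
          · simp only [hgd0 ζ hρ, zero_apply, mul_zero, add_zero, norm_zero]
            positivity
      have hpomp := norm_le_of_norm_dbar_le hU (ζ₀ := ζ₁) hR0.le (fun ζ h => by
        have h1 : ‖ζ₁‖ < 2 * ζ₁.re := sectorWeight_pos_iff.1 (hc₁0.trans_le hζ₁.1)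
        have h2 := norm_sub_le ζ ζ₁
        by_contra h3
        have h4 := hgn ζ (fun h5 => h3 (by simp [h5]))
        linarith [hζ₁.2]) hbound
      rw [norm_mul, norm_carlemanWeight (sectorWeight_pos_iff.1 (hc₁0.trans_le hζ₁.1)),
        hgu ζ₁ hζ₁.1 hζ₁.2, ← hM] at hpomp
      have hhalf : R * (C₃ * M / τ) ≤ M / 2 := by
        rw [mul_div_assoc', div_le_div_iff₀ hτ two_pos]
        nlinarith
      have hMb : M ≤ 2 * R * C' * Real.exp (τ * c₁) := by
        rw [mul_add] at hpomp
        linarith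
      have h1 := (hmax' ζ₀ (by rw [hc₁]; linarith) hρ₀).trans hMb
      have h2 : τ * sectorWeight ζ₀ = τ * c₁ + τ * c₁ := by rw [hc₁]; ring
      rw [h2, Real.exp_add, mul_assoc] at h1
      rw [Real.exp_neg, ← div_eq_mul_inv, le_div_iff₀ (Real.exp_pos _)]
      have h3 : Real.exp (τ * c₁) * (‖u ζ₀‖ * Real.exp (τ * c₁)) ≤
          Real.exp (τ * c₁) * (2 * R * C') := by linarith
      exact le_of_mul_le_mul_left h3 (Real.exp_pos _)
    have hlim : Tendsto (fun τ : ℝ => 2 * R * C' * Real.exp (-(τ * c₁))) atTop (𝓝 0) := by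
      have : Tendsto (fun τ : ℝ => τ * c₁) atTop atTop := tendsto_id.atTop_mul_const hc₁0
      simpa using (Real.tendsto_exp_neg_atTop_nhds_zero.comp this).const_mul (2 * R * C')
    have hle : ‖u ζ₀‖ ≤ 0 := by
      refine ge_of_tendsto hlim ?_
      filter_upwards [eventually_gt_atTop 0, eventually_ge_atTop (2 * R * C₃)] with τ h1 h2
      exact key τ h1 h2
    simpa using hle
  intro ζ hζ hρ
  have := (est (c := sectorWeight ζ) (τ := 1) (M := 0) (sectorWeight_pos_iff.2 hζ) one_pos
    (fun z hz hzρ => by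
      rw [hu0 z (sectorWeight_pos_iff.1 ((sectorWeight_pos_iff.2 hζ).trans_le hz)) hzρ]; simp)
    ζ le_rfl hρ).2
  simpa using this

/-- The affine chart in which `3 ∂ₜ² + ∂ₛ²` becomes the Laplacian. -/
def sectorChart (ζ : ℂ) : ℝ × ℝ := (1 + ζ.im, 1 - √3 * ζ.re)

theorem hasFDerivAt_sectorChart (ζ : ℂ) :
    HasFDerivAt sectorChart (imCLM.prod (-(√3 • reCLM))) ζ :=
  (imCLM.hasFDerivAt.const_add 1).prodMk ((reCLM.hasFDerivAt.const_mul √3).const_sub 1)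

theorem contDiff_sectorChart {n : WithTop ℕ∞} : ContDiff ℝ n sectorChart :=
  (contDiff_const.add imCLM.contDiff).prodMk
    (contDiff_const.sub (contDiff_const.mul reCLM.contDiff))

theorem d1_eq_zero_of_forall_bottom {F : ℝ × ℝ → ℝ} (hF : Differentiable ℝ F) {a b : ℝ}
    (h : ∀ s ∈ Ioo a b, F (s, 0) = 0) : ∀ s ∈ Ioo a b, d1 F (s, 0) = 0 := by
  intro s hs
  have h1 : HasDerivAt (fun s : ℝ => (s, (0 : ℝ))) (1, 0) s :=
    (hasDerivAt_id s).prodMk (hasDerivAt_const s 0)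
  have h2 := (hF (s, 0)).hasFDerivAt.comp_hasDerivAt s h1
  refine h2.unique ((hasDerivAt_const s (0 : ℝ)).congr_of_eventuallyEq ?_)
  filter_upwards [Ioo_mem_nhds hs.1 hs.2] with x hx
  exact h x hx

theorem fderiv_apply_eq_d1_d2 (F : ℝ × ℝ → ℝ) (p w : ℝ × ℝ) :
    fderiv ℝ F p w = w.1 * d1 F p + w.2 * d2 F p := by
  have : w = w.1 • ((1 : ℝ), (0 : ℝ)) + w.2 • ((0 : ℝ), (1 : ℝ)) := by simp
  conv_lhs => rw [this, map_add, map_smul, map_smul]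
  rfl

/-- Unique continuation for the kernel equation in the characteristic triangle. -/
theorem eq_zero_of_kernelEq {lam : ℝ} {W : ℝ × ℝ → ℝ} (hW : ContDiff ℝ 3 W)
    (heq : ∀ s t, 0 ≤ t → t ≤ s → s ≤ 2 - t → KernelEq lam W (s, t))
    (haxis : ∀ t ∈ Icc (0 : ℝ) 1, W (1, t) = 0) (hbot : ∀ s ∈ Icc (0 : ℝ) 2, W (s, 0) = 0)
    (hbot' : ∀ s ∈ Icc (0 : ℝ) 2, d2 W (s, 0) = 0) :
    ∀ s t, 0 ≤ t → t ≤ s → s ≤ 2 - t → W (s, t) = 0 := by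
  have hr0 : 0 < √3 := by positivity
  have hr2 : √3 * √3 = 3 := Real.mul_self_sqrt (by norm_num)
  have hd : ∀ {F : ℝ × ℝ → ℝ} {n : ℕ}, ContDiff ℝ (n + 1 : ℕ) F → Differentiable ℝ F :=
    fun h => h.differentiable (by simp)
  have a1 : ContDiff ℝ (1 + 1 : ℕ) (d1 W) := contDiff_d1 (n := 2) hW
  have a2 : ContDiff ℝ (1 + 1 : ℕ) (d2 W) := contDiff_d2 (n := 2) hW
  set Q := d1 (d1 W) with hQ
  set P := d2 (d1 W) with hP
  have hQ1 : ContDiff ℝ (0 + 1 : ℕ) Q := contDiff_d1 a1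
  have hP1 : ContDiff ℝ (0 + 1 : ℕ) P := contDiff_d2 a1
  have hcomm : d1 P = d2 Q := d1_d2_comm a1
  have hcomm' : d1 (d2 W) = P := d1_d2_comm (hW.of_le (by norm_num))
  -- all the relevant derivatives vanish on the bottom edge
  have b1 : ∀ s ∈ Ioo (0 : ℝ) 2, d1 W (s, 0) = 0 :=
    d1_eq_zero_of_forall_bottom (hd (n := 2) hW) fun s hs => hbot s (Ioo_subset_Icc_self hs)
  have bQ : ∀ s ∈ Ioo (0 : ℝ) 2, Q (s, 0) = 0 := d1_eq_zero_of_forall_bottom (hd a1) b1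
  have bQ1 : ∀ s ∈ Ioo (0 : ℝ) 2, d1 Q (s, 0) = 0 := d1_eq_zero_of_forall_bottom (hd hQ1) bQ
  have bP : ∀ s ∈ Ioo (0 : ℝ) 2, P (s, 0) = 0 := by
    rw [← hcomm']
    exact d1_eq_zero_of_forall_bottom (hd a2) fun s hs => hbot' s (Ioo_subset_Icc_self hs)
  have bP1 : ∀ s ∈ Ioo (0 : ℝ) 2, d1 P (s, 0) = 0 := d1_eq_zero_of_forall_bottom (hd hP1) bP
  have bP2 : ∀ s ∈ Ioo (0 : ℝ) 2, d2 P (s, 0) = 0 := by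
    intro s hs
    have := heq s 0 le_rfl hs.1.le (by linarith [hs.2])
    rw [KernelEq, ← hQ, ← hP, bQ1 s hs, b1 s hs, hbot s (Ioo_subset_Icc_self hs)] at this
    linarith
  set u : ℂ → ℂ := fun ζ => ((-(√3 * P (sectorChart ζ)) : ℝ) : ℂ) +
    ((-Q (sectorChart ζ) : ℝ) : ℂ) * I with hu
  have hu1 : ContDiff ℝ 1 u := by
    have e1 : ContDiff ℝ 1 (P ∘ sectorChart) := ContDiff.comp hP1 contDiff_sectorChart
    have e2 : ContDiff ℝ 1 (Q ∘ sectorChart) := ContDiff.comp hQ1 contDiff_sectorChart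
    exact (ofRealCLM.contDiff.comp (contDiff_const.mul e1).neg).add
      ((ofRealCLM.contDiff.comp e2.neg).mul contDiff_const)
  have hchain : ∀ {F : ℝ × ℝ → ℝ}, Differentiable ℝ F → ∀ ζ,
      HasFDerivAt (fun ζ => F (sectorChart ζ))
        ((fderiv ℝ F (sectorChart ζ)).comp (imCLM.prod (-(√3 • reCLM)))) ζ := fun hF ζ =>
    (hF _).hasFDerivAt.comp ζ (hasFDerivAt_sectorChart ζ)
  have hfu : ∀ ζ w : ℂ, fderiv ℝ u ζ w =
      ((-(√3 * (w.im * d1 P (sectorChart ζ) - √3 * w.re * d2 P (sectorChart ζ))) : ℝ) : ℂ) +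
      ((-(w.im * d1 Q (sectorChart ζ) - √3 * w.re * d2 Q (sectorChart ζ)) : ℝ) : ℂ) * I := by
    intro ζ w
    have h1 := (ofRealCLM.hasFDerivAt.comp ζ ((hchain (hd hP1) ζ).const_mul √3).neg).add
      ((ofRealCLM.hasFDerivAt.comp ζ (hchain (hd hQ1) ζ).neg).mul_const I)
    have h2 : fderiv ℝ u ζ = _ := h1.fderiv
    rw [h2]
    simp [fderiv_apply_eq_d1_d2]
    ring
  have hsec : ∀ ζ : ℂ, ‖ζ‖ < 2 * ζ.re → 0 < ζ.re ∧ |ζ.im| < √3 * ζ.re := by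
    intro ζ hζ
    have h0 : 0 < ζ.re := by linarith [norm_nonneg ζ]
    refine ⟨h0, abs_lt_of_sq_lt_sq ?_ (by positivity)⟩
    have h1 : ‖ζ‖ ^ 2 = ζ.re ^ 2 + ζ.im ^ 2 := by
      rw [← normSq_eq_norm_sq, normSq_apply]; ring
    have h2 : ‖ζ‖ ^ 2 < (2 * ζ.re) ^ 2 := by gcongr
    nlinarith
  have hbottom : ∀ ζ : ℂ, ‖ζ‖ < 2 * ζ.re → ζ.re = √3 / 3 →
      ∃ s ∈ Ioo (0 : ℝ) 2, sectorChart ζ = (s, 0) := by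
    intro ζ hζ hre
    have h1 := abs_lt.1 (hsec ζ hζ).2
    have h2 : √3 * ζ.re = 1 := by rw [hre]; linarith
    refine ⟨1 + ζ.im, ⟨by linarith [h1.1], by linarith [h1.2]⟩, ?_⟩
    simp [sectorChart, h2]
  have hzero := eq_zero_of_norm_dbar_le (u := u) (v := fun ζ => d1 W (sectorChart ζ))
    (V := fun ζ => W (sectorChart ζ)) (ρ := √3 / 3) (C₀ := |lam| / 2 + 1) hu1 (by positivity)
    ?_ ?_ ?_ ?_ ?_ ?_
  · have hopen : ∀ s t, 0 ≤ t → t < s → s < 2 - t → W (s, t) = 0 := by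
      intro s t ht hts hst
      have h1 := hzero ⟨(1 - t) / √3, s - 1⟩ ?_ ?_
      · convert h1 using 2
        simp only [sectorChart]
        rw [mul_div_cancel₀ _ hr0.ne']
        ext <;> simp
      · rw [norm_eq_sqrt_sq_add_sq, Real.sqrt_lt' (by simp only; apply mul_pos two_pos; apply div_pos (by linarith) hr0)]
        simp only
        rw [mul_pow, div_pow, Real.sq_sqrt (by norm_num)]
        nlinarith
      · simp only
        rw [div_le_div_iff₀ hr0 (by norm_num)]
        nlinarith
    intro s t ht hts hst
    rcases eq_or_lt_of_le (show t ≤ 1 by linarith) with h1 | h1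
    · have : s = 1 := by linarith
      rw [this]
      exact haxis t ⟨ht, h1.le⟩
    · -- approach the point along the segment to the axis
      have hc : Continuous fun ε : ℝ => W (s + ε * (1 - s), t) := hW.continuous.comp (by fun_prop)
      have hlim := (hc.tendsto 0).mono_left (nhdsWithin_le_nhds (s := Ioi 0))
      simp only [zero_mul, add_zero] at hlim
      refine tendsto_nhds_unique hlim (tendsto_const_nhds.congr' ?_)
      filter_upwards [Ioo_mem_nhdsGT (show (0 : ℝ) < 1 by norm_num)] with ε hε
      exact (hopen _ _ ht (by nlinarith [hε.1, hε.2]) (by nlinarith [hε.1, hε.2])).symm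
  · intro ζ h
    have e : HasDerivAt (fun h : ℝ => ζ + h) (1 : ℂ) h :=
      ((ofRealCLM.hasDerivAt (x := h)).const_add ζ).congr_deriv (by simp)
    refine ((hchain (hd a1) (ζ + h)).comp_hasDerivAt h e).congr_deriv ?_
    simp [fderiv_apply_eq_d1_d2, hu, hP]
  · intro x y
    have e : HasDerivAt (fun y : ℝ => (⟨x, y⟩ : ℂ)) I y := by
      have e1 : HasDerivAt (fun y : ℝ => (x : ℂ) + y * I) I y :=
        (((ofRealCLM.hasDerivAt (x := y)).mul_const I).const_add (x : ℂ)).congr_deriv (by simp)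
      exact e1.congr_of_eventuallyEq (Eventually.of_forall fun z => by
        apply Complex.ext <;> simp)
    refine ((hchain (hd (n := 2) hW) ⟨x, y⟩).comp_hasDerivAt y e).congr_deriv ?_
    simp [fderiv_apply_eq_d1_d2]
  · intro ζ hζ hρ
    obtain ⟨h0, h1⟩ := hsec ζ hζ
    have h2 := abs_lt.1 h1
    have h3 : √3 * ζ.re ≤ 1 := by nlinarith
    have h4 := heq (1 + ζ.im) (1 - √3 * ζ.re) (by linarith) (by linarith) (by linarith)
    change KernelEq lam W (sectorChart ζ) at h4
    rw [KernelEq, ← hQ, ← hP] at h4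
    have h5 : fderiv ℝ u ζ 1 + I * fderiv ℝ u ζ I =
        ((lam / 2 * W (sectorChart ζ) - d1 W (sectorChart ζ) : ℝ) : ℂ) := by
      rw [hfu, hfu, hcomm]
      have h6 : lam / 2 * W (sectorChart ζ) - d1 W (sectorChart ζ) =
          √3 * √3 * d2 P (sectorChart ζ) + d1 Q (sectorChart ζ) := by rw [hr2]; linarith
      rw [h6]
      simp only [one_im, one_re, I_im, I_re]
      push_cast
      linear_combination (-(d1 Q (sectorChart ζ) : ℂ)) * I_sq
    rw [h5, norm_real, Real.norm_eq_abs]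
    refine (abs_sub _ _).trans ?_
    rw [abs_mul, abs_div, abs_two]
    nlinarith [abs_nonneg lam, abs_nonneg (W (sectorChart ζ)), abs_nonneg (d1 W (sectorChart ζ)),
      mul_nonneg (abs_nonneg lam) (abs_nonneg (d1 W (sectorChart ζ)))]
  · intro ζ hζ hρ
    obtain ⟨s, hs, he⟩ := hbottom ζ hζ hρ
    constructor
    · simp [hu, he, bP s hs, bQ s hs]
    · ext w
      all_goals simp [hfu, he, bP1 s hs, bP2 s hs, bQ1 s hs, ← hcomm]
  · intro ζ hζ hρ
    obtain ⟨s, hs, he⟩ := hbottom ζ hζ hρ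
    simp only [he, b1 s hs]
  · intro x hx
    have h1 := hx.2
    refine (congrArg W ?_).trans (haxis (1 - √3 * x) ⟨by nlinarith, by nlinarith [hx.1]⟩)
    simp [sectorChart]

section

variable {lam : ℝ} {μ ϑ α : ℝ → ℂ}

/-- The kernel equation is additive. -/
theorem KernelEq.sub {F G : ℝ × ℝ → ℝ} {p : ℝ × ℝ} (hF : ContDiff ℝ 3 F) (hG : ContDiff ℝ 3 G)
    (h1 : KernelEq lam F p) (h2 : KernelEq lam G p) : KernelEq lam (F - G) p := by
  have hd : ∀ {F : ℝ × ℝ → ℝ} {n : ℕ}, ContDiff ℝ (n + 1 : ℕ) F → Differentiable ℝ F :=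
    fun h => h.differentiable (by simp)
  have d1C : ∀ {F : ℝ × ℝ → ℝ}, ContDiff ℝ 3 F → ContDiff ℝ (1 + 1 : ℕ) (d1 F) :=
    fun h => contDiff_d1 (n := 2) h
  rw [KernelEq] at *
  rw [d1_sub (hd (n := 2) hF) (hd (n := 2) hG), d1_sub (hd (d1C hF)) (hd (d1C hG)),
    d2_sub (hd (d1C hF)) (hd (d1C hG)),
    d1_sub (hd (contDiff_d1 (d1C hF))) (hd (contDiff_d1 (d1C hG))),
    d2_sub (hd (contDiff_d2 (d1C hF))) (hd (contDiff_d2 (d1C hG)))]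
  simp only [Pi.sub_apply]
  linarith

/-- A solution of the kernel equation on the characteristic triangle with homogeneous boundary
conditions vanishes. -/
theorem eq_zero_of_kernelEq_of_boundary (hF : CharacteristicFamily lam μ ϑ α) {G : ℝ × ℝ → ℝ}
    (hG : ContDiff ℝ 3 G)
    (heq : ∀ s t, 0 ≤ t → t ≤ s → s ≤ 2 - t → KernelEq lam G (s, t))
    (hside : ∀ t ∈ Icc (0 : ℝ) 1, G (2 - t, t) = 0) (hbot : ∀ s ∈ Icc (0 : ℝ) 2, G (s, 0) = 0)
    (hbot' : ∀ s ∈ Icc (0 : ℝ) 2, d2 G (s, 0) = 0) :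
    ∀ s t, 0 ≤ t → t ≤ s → s ≤ 2 - t → G (s, t) = 0 := by
  set g : ℝ → ℝ := fun t => G (1, t) with hg
  have hg3 : ContDiff ℝ 3 g := hG.comp (contDiff_const.prodMk contDiff_id)
  have hg1 : ContDiff ℝ 1 g := hg3.of_le (by norm_num)
  have hgc : Continuous g := hg1.continuous
  have hg0 : g 0 = 0 := hbot 1 ⟨by norm_num, by norm_num⟩
  have hg0' : deriv g 0 = 0 := by
    have h : HasDerivAt (fun t : ℝ => ((1 : ℝ), t)) (0, 1) 0 :=
      (hasDerivAt_const 0 (1 : ℝ)).prodMk (hasDerivAt_id 0)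
    have h1 := ((hG.differentiable (by simp) (1, 0)).hasFDerivAt.comp_hasDerivAt 0 h).deriv
    exact h1.trans (hbot' 1 ⟨by norm_num, by norm_num⟩)
  set G' : ℝ × ℝ → ℝ := fun p => transport μ ϑ α 0 g (p - (1, 0)) with hG'
  have hG'3 : ContDiff ℝ 3 G' :=
    (hF.contDiff_transport 0 3 hg3).comp (contDiff_id.sub contDiff_const)
  have s1 : ∀ F : ℝ × ℝ → ℝ, d1 (fun q => F (q - (1, 0))) = fun q => d1 F (q - (1, 0)) := fun F => by
    ext p; simp [d1, fderiv_comp_sub]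
  have s2 : ∀ F : ℝ × ℝ → ℝ, d2 (fun q => F (q - (1, 0))) = fun q => d2 F (q - (1, 0)) := fun F => by
    ext p; simp [d2, fderiv_comp_sub]
  have hG'eq : ∀ p, KernelEq lam G' p := by
    intro p
    have := hF.kernelEq_transport 0 hg1 (p - (1, 0))
    rw [KernelEq] at *
    simpa only [hG', s1, s2] using this
  have hdiff := eq_zero_of_kernelEq (W := G - G') (hG.sub hG'3)
    (fun s t h1 h2 h3 => (heq s t h1 h2 h3).sub hG hG'3 (hG'eq _))
    (fun t _ => by
      have h := hF.transport_left 0 hgc t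
      simp only [Pi.sub_apply, hG', Prod.mk_sub_mk, sub_self, sub_zero]
      rw [h]
      exact sub_self _)
    (fun s hs => by simp [hG', hF.transport_bottom 0 hgc, hg0, hbot s hs])
    (fun s hs => by
      rw [d2_sub (hG.differentiable (by simp)) (hG'3.differentiable (by simp)), Pi.sub_apply,
        hbot' s hs, hG', s2]
      simp [hF.d2_transport_bottom 0 hg1, hg0'])
  have hGG' : ∀ s t, 0 ≤ t → t ≤ s → s ≤ 2 - t → G (s, t) =
      g t + ∫ τ in (0 : ℝ)..t, (superpose μ ϑ 1 0 α (s - 1, t - τ)).re * g τ := by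
    intro s t h1 h2 h3
    have h4 := hdiff s t h1 h2 h3
    rw [Pi.sub_apply, sub_eq_zero] at h4
    have h5 := hF.transport_eq_add_integral 0 hgc (s - 1) t
    rw [zero_mul, zero_add] at h5
    rw [h4, ← h5]
    simp [hG']
  have hK : Continuous fun p => (superpose μ ϑ 1 0 α p).re :=
    continuous_re.comp (continuous_superpose hF.continuous_mu hF.continuous_theta 1 (g := 0)
      continuous_const hF.continuous_alpha)
  obtain ⟨C, hC⟩ := (isCompact_Icc (a := ((0, 0) : ℝ × ℝ)) (b := (1, 1))).exists_bound_of_continuousOn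
    hK.continuousOn
  have hgz : ∀ t ∈ Icc (0 : ℝ) 1, g t = 0 := by
    refine eq_zero_of_abs_le_integral hgc (C := C) fun t ht => ?_
    have h1 := hGG' (2 - t) t ht.1 (by linarith [ht.2]) le_rfl
    rw [hside t ht] at h1
    have h2 : g t = -∫ τ in (0 : ℝ)..t, (superpose μ ϑ 1 0 α (2 - t - 1, t - τ)).re * g τ := by
      linarith
    rw [h2, abs_neg, ← intervalIntegral.integral_const_mul, ← Real.norm_eq_abs]
    have hint : IntervalIntegrable (fun τ => C * |g τ|) volume 0 t :=
      Continuous.intervalIntegrable (by fun_prop) _ _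
    refine intervalIntegral.norm_integral_le_of_norm_le ht.1 (ae_of_all _ fun τ hτ => ?_) hint
    rw [norm_mul]
    refine mul_le_mul_of_nonneg_right (hC _ ?_) (abs_nonneg _)
    have := ht.1
    have := ht.2
    have := hτ.1
    have := hτ.2
    constructor <;> constructor <;> simp only <;> linarith
  intro s t h1 h2 h3
  rw [hGG' s t h1 h2 h3, hgz t ⟨h1, by linarith⟩, zero_add]
  refine intervalIntegral.integral_zero_ae (ae_of_all _ fun τ hτ => ?_)
  rw [uIoc_of_le h1] at hτ
  rw [hgz τ ⟨hτ.1.le, by linarith [hτ.2]⟩, mul_zero]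

/-- Two inverse controller kernels agree on the triangle. -/
theorem IsInverseControllerKernel.eq (hF : CharacteristicFamily lam μ ϑ α) {l l' : ℝ → ℝ → ℝ}
    (hl : IsInverseControllerKernel lam l) (hl' : IsInverseControllerKernel lam l') {x y : ℝ}
    (hxy : (x, y) ∈ T) : l' x y = l x y := by
  obtain ⟨hc, he, h1, hd, hx⟩ := hl
  obtain ⟨hc', he', h1', hd', hx'⟩ := hl'
  set D : ℝ × ℝ → ℝ := Function.uncurry l' - Function.uncurry l with hD
  have hDc : ContDiff ℝ 3 D := hc'.sub hc
  set G : ℝ × ℝ → ℝ := fun p => D ((p.1 - p.2) / 2, (p.1 + p.2) / 2) with hG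
  have hG3 : ContDiff ℝ 3 G := hDc.comp (by fun_prop)
  have hDG : D = G ∘ charCoord := by
    ext p
    simp only [hG, Function.comp_apply, charCoord_apply]
    congr 1
    ext <;> ring
  have hkey := eq_zero_of_kernelEq_of_boundary hF hG3 ?_ ?_ ?_ ?_ (x + y) (y - x)
    (by linarith [hxy.2.1]) (by linarith [hxy.1]) (by linarith [hxy.2.2])
  · have h2 : D (x, y) = 0 := by rw [hDG]; exact hkey
    exact sub_eq_zero.1 h2
  · intro s t h1 h2 h3
    have hT : ((s - t) / 2, (s + t) / 2) ∈ T := ⟨by simp only; linarith, by simp only; linarith,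
      by simp only; linarith⟩
    have e1 := he _ _ hT
    have e2 := he' _ _ hT
    rw [kernelOp_uncurry hc] at e1
    rw [kernelOp_uncurry hc'] at e2
    have e3 := kernelOp_comp_charCoord hG3 ((s - t) / 2, (s + t) / 2)
    rw [← hDG, hD, kernelOp_sub hc' hc, Pi.sub_apply, e1, e2, ← mul_sub] at e3
    have e4 : charCoord ((s - t) / 2, (s + t) / 2) = (s, t) := by
      rw [charCoord_apply]; ext <;> ring
    rw [e4] at e3
    exact e3.symm
  · intro t ht
    have e1 : G (2 - t, t) = D (1 - t, 1) := by
      simp only [hG]; congr 1; ext <;> ring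
    have hm : 1 - t ∈ Icc (0 : ℝ) 1 := ⟨by linarith [ht.2], by linarith [ht.1]⟩
    rw [e1]
    simp [hD, h1 _ hm, h1' _ hm]
  · intro s hs
    have hm : s / 2 ∈ Icc (0 : ℝ) 1 := ⟨by linarith [hs.1], by linarith [hs.2]⟩
    simp [hG, hD, hd _ hm, hd' _ hm]
  · have hG1 : Differentiable ℝ G := hG3.differentiable (by simp)
    have hd1 : EqOn (fun s : ℝ => d1 G (s, 0)) (fun _ => 0) (closure (Ioo 0 2)) := by
      refine EqOn.closure (d1_eq_zero_of_forall_bottom hG1 fun s hs => ?_)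
        ((contDiff_d1 (n := 2) hG3).continuous.comp (by fun_prop)) continuous_const
      have hm : s / 2 ∈ Icc (0 : ℝ) 1 := ⟨by linarith [hs.1], by linarith [hs.2]⟩
      simp [hG, hD, hd _ hm, hd' _ hm]
    rw [closure_Ioo (by norm_num)] at hd1
    intro s hs
    have hm : s / 2 ∈ Icc (0 : ℝ) 1 := ⟨by linarith [hs.1], by linarith [hs.2]⟩
    have hc1 := hc.differentiable (by simp)
    have hc1' := hc'.differentiable (by simp)
    have e1 := hx _ hm
    have e2 := hx' _ hm
    rw [pdx_eq_d1 hc1] at e1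
    rw [pdx_eq_d1 hc1'] at e2
    beta_reduce at e1 e2
    have e3 := congrFun (d1_comp_charCoord hG1) (s / 2, s / 2)
    have e4 : charCoord (s / 2, s / 2) = (s, 0) := by
      rw [charCoord_apply]; ext <;> ring
    have e5 : d1 G (s, 0) = 0 := hd1 hs
    rw [← hDG, hD, d1_sub hc1' hc1, Function.comp_apply, e4, Pi.sub_apply, Pi.sub_apply, e1, e2,
      e5] at e3
    linarith

end

end Kernel

/-- Existence and uniqueness (as a function on `T`) of the inverse controller kernel. -/
theorem inverse_controller_kernel_exists_unique (lam : ℝ) (hlam : 0 < lam) :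
    ∃ l : ℝ → ℝ → ℝ, IsInverseControllerKernel lam l ∧
      ∀ l' : ℝ → ℝ → ℝ, IsInverseControllerKernel lam l' →
        ∀ x y : ℝ, (x, y) ∈ T → l' x y = l x y := by
  obtain ⟨μ, ϑ, α, h1, h2, h3, h4, h5, h6, h7⟩ := exists_characteristic_family hlam
  have hF : CharacteristicFamily lam μ ϑ α := ⟨h1, h2, h3, h4, h5, h6, h7⟩
  obtain ⟨l, hl⟩ := exists_isInverseControllerKernel hF
  exact ⟨l, hl, fun l' hl' x y hxy => hl.eq hF hl' hxy⟩
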